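/- Let K be an algebraically closed field of characteristic 0 or at least 11, and let f ∈ K[X,Z] be a squarefree binary octic with Shioda invariants J₂,…,J₁₀. Then the conditions 96·J₄(f) = J₂(f)², 2304·J₆(f) = −J₂(f)³, 17920·J₈(f) = J₂(f)⁴, 430080·J₁₀(f) = −J₂(f)⁵ and J₃(f) = J₅(f) = J₇(f) = J₉(f) = 0 hold if and only if f is GL₂(K)-equivalent to X⁷Z − XZ⁷ (the homogenization of x⁷ − x); equivalently, the genus-3 hyperelliptic curve y² = f(x,1) has automorphism group U₆ (the group of order 24 ⟨S,T : S¹² = T² = 1, TST = S⁵⟩) if and only if these relations hold, and such a curve is K-isomorphic to y² = x⁷ − x. -/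

import Mathlib

open MvPolynomial

/-- Iterated partial derivative in the variable `x` (the variable `0`). -/
noncomputable def dX {k : Type*} [CommSemiring k] (n : ℕ) (p : MvPolynomial (Fin 2) k) :
    MvPolynomial (Fin 2) k :=
  (fun q => pderiv (0 : Fin 2) q)^[n] p

/-- Iterated partial derivative in the variable `z` (the variable `1`). -/
noncomputable def dZ {k : Type*} [CommSemiring k] (n : ℕ) (p : MvPolynomial (Fin 2) k) :
    MvPolynomial (Fin 2) k :=
  (fun q => pderiv (1 : Fin 2) q)^[n] p

/-- The `h`-th transvectant of two binary forms of degrees `r₁` and `r₂`. -/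
noncomputable def transvectant {k : Type*} [Field k] (r₁ r₂ h : ℕ)
    (f g : MvPolynomial (Fin 2) k) : MvPolynomial (Fin 2) k :=
  C ((((r₁ - h).factorial * (r₂ - h).factorial : ℕ) : k) /
      (((r₁.factorial * r₂.factorial : ℕ)) : k)) *
    ∑ j ∈ Finset.range (h + 1),
      C ((-1 : k) ^ j * (h.choose j : k)) * (dX (h - j) (dZ j f) * dX j (dZ (h - j) g))

section Shioda

variable {k : Type*} [Field k]

/-- The covariant `𝔤 = (f,f)₄` of a binary octic. -/
noncomputable def covG (f : MvPolynomial (Fin 2) k) := transvectant 8 8 4 f f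

/-- The covariant `𝔨 = (f,f)₆` of a binary octic. -/
noncomputable def covK (f : MvPolynomial (Fin 2) k) := transvectant 8 8 6 f f

/-- The covariant `𝔥 = (𝔨,𝔨)₂` of a binary octic. -/
noncomputable def covH (f : MvPolynomial (Fin 2) k) := transvectant 4 4 2 (covK f) (covK f)

/-- The covariant `𝔪 = (f,𝔨)₄` of a binary octic. -/
noncomputable def covM (f : MvPolynomial (Fin 2) k) := transvectant 8 4 4 f (covK f)

/-- The covariant `𝔫 = (f,𝔥)₄` of a binary octic. -/
noncomputable def covN (f : MvPolynomial (Fin 2) k) := transvectant 8 4 4 f (covH f)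

/-- The covariant `𝔭 = (𝔤,𝔨)₄` of a binary octic. -/
noncomputable def covP (f : MvPolynomial (Fin 2) k) := transvectant 8 4 4 (covG f) (covK f)

/-- The covariant `𝔮 = (𝔤,𝔥)₄` of a binary octic. -/
noncomputable def covQ (f : MvPolynomial (Fin 2) k) := transvectant 8 4 4 (covG f) (covH f)

/-- The Shioda invariant `J₂ = (f,f)₈`. -/
noncomputable def shJ2 (f : MvPolynomial (Fin 2) k) : k :=
  constantCoeff (transvectant 8 8 8 f f)

/-- The Shioda invariant `J₃ = (f,𝔤)₈`. -/
noncomputable def shJ3 (f : MvPolynomial (Fin 2) k) : k :=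
  constantCoeff (transvectant 8 8 8 f (covG f))

/-- The Shioda invariant `J₄ = (𝔨,𝔨)₄`. -/
noncomputable def shJ4 (f : MvPolynomial (Fin 2) k) : k :=
  constantCoeff (transvectant 4 4 4 (covK f) (covK f))

/-- The Shioda invariant `J₅ = (𝔪,𝔨)₄`. -/
noncomputable def shJ5 (f : MvPolynomial (Fin 2) k) : k :=
  constantCoeff (transvectant 4 4 4 (covM f) (covK f))

/-- The Shioda invariant `J₆ = (𝔨,𝔥)₄`. -/
noncomputable def shJ6 (f : MvPolynomial (Fin 2) k) : k :=
  constantCoeff (transvectant 4 4 4 (covK f) (covH f))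

/-- The Shioda invariant `J₇ = (𝔪,𝔥)₄`. -/
noncomputable def shJ7 (f : MvPolynomial (Fin 2) k) : k :=
  constantCoeff (transvectant 4 4 4 (covM f) (covH f))

/-- The Shioda invariant `J₈ = (𝔭,𝔥)₄`. -/
noncomputable def shJ8 (f : MvPolynomial (Fin 2) k) : k :=
  constantCoeff (transvectant 4 4 4 (covP f) (covH f))

/-- The Shioda invariant `J₉ = (𝔫,𝔥)₄`. -/
noncomputable def shJ9 (f : MvPolynomial (Fin 2) k) : k :=
  constantCoeff (transvectant 4 4 4 (covN f) (covH f))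

/-- The Shioda invariant `J₁₀ = (𝔮,𝔥)₄`. -/
noncomputable def shJ10 (f : MvPolynomial (Fin 2) k) : k :=
  constantCoeff (transvectant 4 4 4 (covQ f) (covH f))

end Shioda

/-!
The relations for `J₄` and `J₆` say that the quartic covariant `covK f` has vanishing discriminant.
A linear substitution moves its multiple root to `Z = 0` and, when the root is exactly double,
brings the quartic to the form `6 k₂ X² Z² + k₀ Z⁴`. The relations for `J₅`, `J₇`, `J₉` then become
linear in `k₀² a₈`, `k₀ a₆` and `a₄` and give `a₄ = 0`, while `k₀ ≠ 0` would force `a₆ = a₈ = 0`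
and then `k₀ = 0`. With `covK f` a multiple of `X² Z²`, this, `J₂` and `J₈` leave a system of
quadratic equations in the coefficients of `f` whose only solutions are `8 (a₁ X Z⁷ + a₇ X⁷ Z)`
with `a₁ a₇ ≠ 0`, and these are scaled to `X⁷Z - XZ⁷`. If instead `covK f` vanishes or has a root
of multiplicity at least three, then the relations force a multiple root on `f`.

Conversely, `X⁷Z - XZ⁷` is fixed by a diagonal substitution with `det ^ 4 = -1`, under which `J_d`
is multiplied by `det ^ (4 d) = (-1) ^ d`, so its invariants of odd degree vanish.
-/

open Finset Nat

section LinearSubstitution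

variable {R σ τ υ : Type*} [CommRing R] [Fintype τ]

/-- The substitution `X i ↦ ∑ j, M i j * X j`, a right action of matrices on polynomials. -/
noncomputable def linSubst (M : Matrix σ τ R) : MvPolynomial σ R →ₐ[R] MvPolynomial τ R :=
  bind₁ M.toMvPolynomial

theorem linSubst_X (M : Matrix σ τ R) (i : σ) : linSubst M (X i) = ∑ j, C (M i j) * X j := by
  simp [linSubst, Matrix.toMvPolynomial, C_mul_X_eq_monomial]

theorem linSubst_linSubst [Fintype υ] (M : Matrix σ τ R) (N : Matrix τ υ R)
    (p : MvPolynomial σ R) : linSubst N (linSubst M p) = linSubst (M * N) p := by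
  simp only [linSubst, bind₁_bind₁, ← Matrix.toMvPolynomial_mul]

theorem linSubst_one [DecidableEq τ] (p : MvPolynomial τ R) :
    linSubst (1 : Matrix τ τ R) p = p := by
  simp [linSubst]

theorem eval_linSubst (M : Matrix σ τ R) (v : τ → R) (p : MvPolynomial σ R) :
    eval v (linSubst M p) = eval (M.mulVec v) p := by
  have h : (aeval v).comp (linSubst M) = aeval (M.mulVec v) := by
    ext i
    simp [linSubst_X, Matrix.mulVec, dotProduct]
  exact DFunLike.congr_fun h p

theorem constantCoeff_linSubst (M : Matrix σ τ R) (p : MvPolynomial σ R) :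
    constantCoeff (linSubst M p) = constantCoeff p := by
  rw [← eval_zero, ← eval_zero, eval_linSubst, Matrix.mulVec_zero]

theorem pderiv_linSubst [Fintype σ] (M : Matrix σ τ R) (i : τ) (p : MvPolynomial σ R) :
    pderiv i (linSubst M p) = ∑ j, M j i • linSubst M (pderiv j p) := by
  classical
  induction p using MvPolynomial.induction_on with
  | C c => simp [linSubst]
  | add p q hp hq => simp only [map_add, hp, hq, smul_add, sum_add_distrib]
  | mul_X p k hp =>
    have hX : pderiv i (linSubst M (X k)) = C (M k i) := by
      simp [linSubst_X, pderiv_X, Pi.single_apply]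
    simp [hp, hX, pderiv_X, Pi.single_apply, sum_add_distrib, mul_sum, apply_ite (linSubst M),
      smul_eq_C_mul, mul_comm, mul_left_comm]

end LinearSubstitution

section Invertible

variable {R σ : Type*} [CommRing R] [Fintype σ] [DecidableEq σ] {M : Matrix σ σ R}

theorem linSubst_inv_linSubst (hM : IsUnit M.det) (p : MvPolynomial σ R) :
    linSubst M⁻¹ (linSubst M p) = p := by
  rw [linSubst_linSubst, M.mul_nonsing_inv hM, linSubst_one]

theorem linSubst_linSubst_inv (hM : IsUnit M.det) (p : MvPolynomial σ R) :
    linSubst M (linSubst M⁻¹ p) = p := by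
  rw [linSubst_linSubst, M.nonsing_inv_mul hM, linSubst_one]

theorem squarefree_linSubst (hM : IsUnit M.det) {p : MvPolynomial σ R} (hp : Squarefree p) :
    Squarefree (linSubst M p) := fun q hq => by
  have h : IsUnit (linSubst M⁻¹ q) :=
    hp _ (by simpa only [map_mul, linSubst_inv_linSubst hM] using map_dvd (linSubst M⁻¹) hq)
  simpa only [linSubst_linSubst_inv hM] using h.map (linSubst M)

end Invertible

theorem sum_antidiagonal_choose_succ_nsmul_add {A : Type*} [AddCommMonoid A] (n : ℕ)
    (F : ℕ → ℕ → A) :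
    ∑ ij ∈ antidiagonal (n + 1), (n + 1).choose ij.1 • F ij.1 ij.2 =
      ∑ ij ∈ antidiagonal n, n.choose ij.1 • (F ij.1 (ij.2 + 1) + F (ij.1 + 1) ij.2) := by
  simp only [sum_antidiagonal_choose_succ_nsmul, smul_add, sum_add_distrib]
  congr 1
  exact sum_congr rfl fun ij hij => by
    rw [choose_symm_of_eq_add (mem_antidiagonal.mp hij).symm]

section Omega

variable {R : Type*} [CommRing R]

/-- Cayley's Ω-process: the `h`-fold iterate of `∂X ⊗ ∂Z - ∂Z ⊗ ∂X` on `p ⊗ q`, followed by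
multiplication. Up to a constant this is the `h`-th transvectant of `p` and `q`. -/
noncomputable def omegaProcess : ℕ →
    MvPolynomial (Fin 2) R →ₗ[R] MvPolynomial (Fin 2) R →ₗ[R] MvPolynomial (Fin 2) R
  | 0 => LinearMap.mul R _
  | h + 1 =>
    (omegaProcess h).compl₁₂ (pderiv 0).toLinearMap (pderiv 1).toLinearMap -
      (omegaProcess h).compl₁₂ (pderiv 1).toLinearMap (pderiv 0).toLinearMap

theorem omegaProcess_zero (p q : MvPolynomial (Fin 2) R) : omegaProcess 0 p q = p * q :=
  rfl

theorem omegaProcess_succ (h : ℕ) (p q : MvPolynomial (Fin 2) R) :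
    omegaProcess (h + 1) p q =
      omegaProcess h (pderiv 0 p) (pderiv 1 q) - omegaProcess h (pderiv 1 p) (pderiv 0 q) :=
  rfl

theorem omegaProcess_linSubst (M : Matrix (Fin 2) (Fin 2) R) (h : ℕ)
    (p q : MvPolynomial (Fin 2) R) :
    omegaProcess h (linSubst M p) (linSubst M q) = M.det ^ h • linSubst M (omegaProcess h p q) := by
  induction h generalizing p q with
  | zero => simp only [omegaProcess_zero, map_mul, pow_zero, one_smul]
  | succ h ih =>
    simp only [omegaProcess_succ, pderiv_linSubst, Fin.sum_univ_two, map_add, map_smul, map_sub,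
      LinearMap.add_apply, LinearMap.smul_apply, ih, Matrix.det_fin_two]
    module

theorem pderiv_comm {σ : Type*} (i j : σ) (p : MvPolynomial σ R) :
    pderiv i (pderiv j p) = pderiv j (pderiv i p) := by
  induction p using MvPolynomial.induction_on with
  | C c => simp
  | add p q hp hq => simp only [map_add, hp, hq]
  | mul_X p k hp =>
    classical
    have hX : ∀ l m : σ, pderiv l (pderiv m (X k : MvPolynomial σ R)) = 0 := fun l m => by
      simp [pderiv_X, Pi.single_apply, apply_ite (pderiv l)]
    simp only [pderiv_mul, map_add, hX, hp]
    ring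

theorem pderiv_zero_dZ (n : ℕ) (p : MvPolynomial (Fin 2) R) :
    pderiv 0 (dZ n p) = dZ n (pderiv 0 p) := by
  have h : Function.Commute (pderiv (R := R) (0 : Fin 2)) fun q => pderiv 1 q := pderiv_comm 0 1
  exact h.iterate_right n p

theorem omegaProcess_eq_sum (h : ℕ) (p q : MvPolynomial (Fin 2) R) :
    omegaProcess h p q = ∑ ij ∈ antidiagonal h,
      h.choose ij.1 • (-1 : ℤ) ^ ij.1 • (dX ij.2 (dZ ij.1 p) * dX ij.1 (dZ ij.2 q)) := by
  induction h generalizing p q with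
  | zero => simp [omegaProcess_zero, dX, dZ]
  | succ h ih =>
    rw [sum_antidiagonal_choose_succ_nsmul_add h fun i j =>
        (-1 : ℤ) ^ i • (dX j (dZ i p) * dX i (dZ j q)),
      omegaProcess_succ, ih, ih, ← sum_sub_distrib]
    refine sum_congr rfl fun ij _ => ?_
    rw [← smul_sub, pow_succ, mul_neg_one, neg_smul, ← sub_eq_add_neg, ← pderiv_zero_dZ,
      ← pderiv_zero_dZ]
    rfl

end Omega

section Covariant

variable {K : Type*} [Field K]

theorem transvectant_eq_smul_omegaProcess (r₁ r₂ h : ℕ) (f g : MvPolynomial (Fin 2) K) :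
    transvectant r₁ r₂ h f g =
      ((((r₁ - h)! * (r₂ - h)! : ℕ) : K) / ((r₁ ! * r₂ ! : ℕ) : K)) • omegaProcess h f g := by
  rw [transvectant, omegaProcess_eq_sum, smul_eq_C_mul,
    ← Nat.sum_antidiagonal_eq_sum_range_succ (fun i j =>
      C ((-1 : K) ^ i * (h.choose i : K)) * (dX j (dZ i f) * dX i (dZ j g)))]
  congr 1
  refine sum_congr rfl fun ij _ => ?_
  rw [nsmul_eq_mul, zsmul_eq_mul]
  push_cast [map_mul, map_pow, map_neg, map_one, map_natCast]
  ring

/-- A map of binary forms that is covariant of weight `w` under linear substitutions, singular ones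
included. -/
def IsCovariant (w : ℕ) (Φ : MvPolynomial (Fin 2) K → MvPolynomial (Fin 2) K) : Prop :=
  ∀ (M : Matrix (Fin 2) (Fin 2) K) (f), Φ (linSubst M f) = M.det ^ w • linSubst M (Φ f)

/-- A scalar function of binary forms that is multiplied by the `w`-th power of the determinant
under linear substitutions. -/
def IsRelativeInvariant (w : ℕ) (J : MvPolynomial (Fin 2) K → K) : Prop :=
  ∀ (M : Matrix (Fin 2) (Fin 2) K) (f), J (linSubst M f) = M.det ^ w * J f

theorem isCovariant_id : IsCovariant 0 (fun f : MvPolynomial (Fin 2) K => f) := fun M f => by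
  rw [pow_zero, one_smul]

theorem IsCovariant.transvectant {m n : ℕ} {Φ Ψ : MvPolynomial (Fin 2) K → MvPolynomial (Fin 2) K}
    (hΦ : IsCovariant m Φ) (hΨ : IsCovariant n Ψ) (r₁ r₂ h : ℕ) :
    IsCovariant (h + m + n) fun f => transvectant r₁ r₂ h (Φ f) (Ψ f) := fun M f => by
  simp only [transvectant_eq_smul_omegaProcess, hΦ M f, hΨ M f, map_smul, LinearMap.smul_apply,
    omegaProcess_linSubst, smul_smul]
  congr 1
  ring

theorem IsCovariant.isRelativeInvariant {w : ℕ}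
    {Φ : MvPolynomial (Fin 2) K → MvPolynomial (Fin 2) K} (hΦ : IsCovariant w Φ) :
    IsRelativeInvariant w fun f => constantCoeff (Φ f) := fun M f => by
  simp only [hΦ M f, constantCoeff_smul, constantCoeff_linSubst, smul_eq_mul]

theorem isCovariant_covG : IsCovariant 4 (covG (k := K)) :=
  isCovariant_id.transvectant isCovariant_id 8 8 4

theorem isCovariant_covK : IsCovariant 6 (covK (k := K)) :=
  isCovariant_id.transvectant isCovariant_id 8 8 6

theorem isCovariant_covH : IsCovariant 14 (covH (k := K)) :=
  isCovariant_covK.transvectant isCovariant_covK 4 4 2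

theorem isCovariant_covM : IsCovariant 10 (covM (k := K)) :=
  isCovariant_id.transvectant isCovariant_covK 8 4 4

theorem isCovariant_covN : IsCovariant 18 (covN (k := K)) :=
  isCovariant_id.transvectant isCovariant_covH 8 4 4

theorem isCovariant_covP : IsCovariant 14 (covP (k := K)) :=
  isCovariant_covG.transvectant isCovariant_covK 8 4 4

theorem isCovariant_covQ : IsCovariant 22 (covQ (k := K)) :=
  isCovariant_covG.transvectant isCovariant_covH 8 4 4

theorem isRelativeInvariant_shJ2 : IsRelativeInvariant 8 (shJ2 (k := K)) :=
  (isCovariant_id.transvectant isCovariant_id 8 8 8).isRelativeInvariant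

theorem isRelativeInvariant_shJ3 : IsRelativeInvariant 12 (shJ3 (k := K)) :=
  (isCovariant_id.transvectant isCovariant_covG 8 8 8).isRelativeInvariant

theorem isRelativeInvariant_shJ4 : IsRelativeInvariant 16 (shJ4 (k := K)) :=
  (isCovariant_covK.transvectant isCovariant_covK 4 4 4).isRelativeInvariant

theorem isRelativeInvariant_shJ5 : IsRelativeInvariant 20 (shJ5 (k := K)) :=
  (isCovariant_covM.transvectant isCovariant_covK 4 4 4).isRelativeInvariant

theorem isRelativeInvariant_shJ6 : IsRelativeInvariant 24 (shJ6 (k := K)) :=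
  (isCovariant_covK.transvectant isCovariant_covH 4 4 4).isRelativeInvariant

theorem isRelativeInvariant_shJ7 : IsRelativeInvariant 28 (shJ7 (k := K)) :=
  (isCovariant_covM.transvectant isCovariant_covH 4 4 4).isRelativeInvariant

theorem isRelativeInvariant_shJ8 : IsRelativeInvariant 32 (shJ8 (k := K)) :=
  (isCovariant_covP.transvectant isCovariant_covH 4 4 4).isRelativeInvariant

theorem isRelativeInvariant_shJ9 : IsRelativeInvariant 36 (shJ9 (k := K)) :=
  (isCovariant_covN.transvectant isCovariant_covH 4 4 4).isRelativeInvariant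

theorem isRelativeInvariant_shJ10 : IsRelativeInvariant 40 (shJ10 (k := K)) :=
  (isCovariant_covQ.transvectant isCovariant_covH 4 4 4).isRelativeInvariant

end Covariant

section BinaryForm

variable {R : Type*} [CommRing R]

/-- The binary form `∑ (n choose i) a_i X^i Z^(n-i)`. Only the values `a_0, …, a_n` matter; taking a
sequence makes differentiation a shift of the coefficients. -/
noncomputable def binaryForm (n : ℕ) : (ℕ → R) →ₗ[R] MvPolynomial (Fin 2) R where
  toFun a := ∑ i ∈ range (n + 1), C (n.choose i * a i) * (X 0 ^ i * X 1 ^ (n - i))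
  map_add' a b := by simp [mul_add, add_mul, sum_add_distrib]
  map_smul' c a := by simp [smul_eq_C_mul, mul_sum, mul_left_comm, mul_assoc]

theorem binaryForm_apply (n : ℕ) (a : ℕ → R) :
    binaryForm n a = ∑ i ∈ range (n + 1), C (n.choose i * a i) * (X 0 ^ i * X 1 ^ (n - i)) :=
  rfl

theorem binaryForm_congr {n : ℕ} {a b : ℕ → R} (h : ∀ i ≤ n, a i = b i) :
    binaryForm n a = binaryForm n b := by
  rw [binaryForm_apply, binaryForm_apply]
  exact sum_congr rfl fun i hi => by rw [h i (mem_range_succ_iff.mp hi)]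

theorem binaryForm_zero (a : ℕ → R) : binaryForm 0 a = C (a 0) := by
  simp [binaryForm_apply]

theorem eval_binaryForm (n : ℕ) (a : ℕ → R) : eval ![1, 0] (binaryForm n a) = a n := by
  rw [binaryForm_apply, map_sum, sum_range_succ, sum_eq_zero fun i hi => ?_]
  · simp
  · simp [Nat.sub_ne_zero_of_lt (mem_range.mp hi)]

theorem homogenize_eq_binaryForm {n : ℕ} {p : Polynomial R} {a : ℕ → R}
    (h : ∀ i ≤ n, p.coeff i = n.choose i * a i) : p.homogenize n = binaryForm n a := by
  rw [Polynomial.homogenize, binaryForm_apply, Nat.sum_antidiagonal_eq_sum_range_succ_mk]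
  refine sum_congr rfl fun i hi => ?_
  rw [← h i (mem_range_succ_iff.mp hi), monomial_eq, Finsupp.prod_fintype _ _ fun _ => pow_zero _]
  simp

/-- The univariate polynomial `∑ (n choose i) a_i T^i`, dehomogenizing `binaryForm n a`. -/
noncomputable def binomialPoly (n : ℕ) (a : ℕ → R) : Polynomial R :=
  ∑ i ∈ range (n + 1), Polynomial.monomial i (n.choose i * a i)

theorem coeff_binomialPoly (n : ℕ) (a : ℕ → R) (i : ℕ) :
    (binomialPoly n a).coeff i = n.choose i * a i := by
  simp only [binomialPoly, Polynomial.finsetSum_coeff, Polynomial.coeff_monomial, sum_ite_eq',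
    mem_range_succ_iff]
  split_ifs with hi
  · rfl
  · rw [choose_eq_zero_of_lt (not_le.mp hi), cast_zero, zero_mul]

theorem natDegree_binomialPoly_le (n : ℕ) (a : ℕ → R) : (binomialPoly n a).natDegree ≤ n :=
  Polynomial.natDegree_le_iff_coeff_eq_zero.mpr fun i hi => by
    rw [coeff_binomialPoly, choose_eq_zero_of_lt hi, cast_zero, zero_mul]

theorem homogenize_binomialPoly (n : ℕ) (a : ℕ → R) :
    (binomialPoly n a).homogenize n = binaryForm n a :=
  homogenize_eq_binaryForm fun i _ => coeff_binomialPoly n a i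

/-- The shift `(a_i) ↦ (a_{i+1})` of coefficient sequences. -/
def shift : Module.End R (ℕ → R) :=
  LinearMap.funLeft R R succ

theorem shift_apply (a : ℕ → R) (i : ℕ) : shift a i = a (i + 1) :=
  rfl

theorem shift_pow_apply (k : ℕ) (a : ℕ → R) (i : ℕ) : (shift ^ k) a i = a (i + k) := by
  induction k generalizing a with
  | zero => rfl
  | succ k ih => rw [pow_succ, Module.End.mul_apply, ih, shift_apply, add_assoc]

theorem binaryForm_succ (n : ℕ) (a : ℕ → R) :
    binaryForm (n + 1) a = X 1 * binaryForm n a + X 0 * binaryForm n (shift a) := by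
  have h : binomialPoly (n + 1) a =
      binomialPoly n a * 1 + binomialPoly n (shift a) * Polynomial.X := by
    ext (_ | i)
    · simp [coeff_binomialPoly]
    · simp [coeff_binomialPoly, choose_succ_succ, shift_apply]
      ring
  rw [← homogenize_binomialPoly, h, Polynomial.homogenize_add,
    Polynomial.homogenize_mul _ _ (natDegree_binomialPoly_le n a) (by simp),
    Polynomial.homogenize_mul _ _ (natDegree_binomialPoly_le n _) Polynomial.natDegree_X_le,
    homogenize_binomialPoly, homogenize_binomialPoly, Polynomial.homogenize_one,
    Polynomial.homogenize_X one_ne_zero]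
  simp [mul_comm]

theorem pderiv_zero_binaryForm (n : ℕ) (a : ℕ → R) :
    pderiv 0 (binaryForm (n + 1) a) = (n + 1 : R) • binaryForm n (shift a) := by
  induction n generalizing a with
  | zero => simp [binaryForm_succ, binaryForm_zero]
  | succ n ih =>
    rw [binaryForm_succ, map_add, pderiv_mul, pderiv_mul, ih, ih, pderiv_X_self,
      pderiv_X_of_ne one_ne_zero, binaryForm_succ n (shift a)]
    simp only [smul_eq_C_mul, cast_add, cast_one, map_add, map_one]
    ring

theorem pderiv_one_binaryForm (n : ℕ) (a : ℕ → R) :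
    pderiv 1 (binaryForm (n + 1) a) = (n + 1 : R) • binaryForm n a := by
  induction n generalizing a with
  | zero => simp [binaryForm_succ, binaryForm_zero]
  | succ n ih =>
    rw [binaryForm_succ, map_add, pderiv_mul, pderiv_mul, ih, ih, pderiv_X_self,
      pderiv_X_of_ne zero_ne_one, binaryForm_succ n a]
    simp only [smul_eq_C_mul, cast_add, cast_one, map_add, map_one]
    ring

/-- The coefficients of a binary form of degree `n` after the substitution `M`, in Sylvester's
symbolic calculus, where `shift` stands for `X / Z`. -/
def linSubstCoeff (M : Matrix (Fin 2) (Fin 2) R) (n : ℕ) (a : ℕ → R) (i : ℕ) : R :=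
  ((M 1 1 • 1 + M 0 1 • shift) ^ (n - i) * (M 1 0 • 1 + M 0 0 • shift) ^ i : Module.End R _) a 0

theorem linSubst_binaryForm (M : Matrix (Fin 2) (Fin 2) R) (n : ℕ) (a : ℕ → R) :
    linSubst M (binaryForm n a) = binaryForm n (linSubstCoeff M n a) := by
  induction n generalizing a with
  | zero => simp [binaryForm_zero, linSubst, linSubstCoeff]
  | succ n ih =>
    set z : Module.End R (ℕ → R) := M 1 1 • 1 + M 0 1 • shift with hz
    set x : Module.End R (ℕ → R) := M 1 0 • 1 + M 0 0 • shift with hx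
    have comm : Commute z x := by
      simp only [hz, hx, Commute, SemiconjBy, add_mul, mul_add, smul_mul_smul_comm, one_mul,
        mul_one]
      module
    have hX : linSubst M (binaryForm (n + 1) a) =
        X 1 * linSubst M (binaryForm n (z a)) + X 0 * linSubst M (binaryForm n (x a)) := by
      simp only [binaryForm_succ, map_add, map_mul, linSubst_X, Fin.sum_univ_two, hz, hx,
        LinearMap.add_apply, LinearMap.smul_apply, Module.End.one_apply, map_smul,
        smul_eq_C_mul, algHom_C, algebraMap_eq]
      ring
    rw [hX, ih, ih, binaryForm_succ]
    congr 2
    · refine binaryForm_congr fun i hi => ?_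
      rw [linSubstCoeff, linSubstCoeff, ← hz, ← hx, ← Module.End.mul_apply, mul_assoc,
        (comm.symm.pow_left i).eq, ← mul_assoc, ← pow_succ, Nat.succ_sub hi]
    · refine binaryForm_congr fun i _ => ?_
      rw [shift_apply, linSubstCoeff, linSubstCoeff, ← hz, ← hx, ← Module.End.mul_apply, mul_assoc,
        ← pow_succ, Nat.add_sub_add_right]

end BinaryForm

section FieldCoefficients

variable {K : Type*} [Field K]

theorem choose_cast_ne_zero {n : ℕ} (hn : (n ! : K) ≠ 0) {i : ℕ} (hi : i ≤ n) :
    (n.choose i : K) ≠ 0 := by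
  rw [← choose_mul_factorial_mul_factorial hi, mul_assoc, cast_mul] at hn
  exact left_ne_zero_of_mul hn

theorem exists_eq_binaryForm {n : ℕ} (hn : (n ! : K) ≠ 0) {f : MvPolynomial (Fin 2) K}
    (hf : f.IsHomogeneous n) : ∃ a, f = binaryForm n a := by
  refine ⟨fun i => (aeval ![Polynomial.X, 1] f).coeff i / n.choose i, ?_⟩
  rw [← homogenize_eq_binaryForm fun i hi => (mul_div_cancel₀ _ (choose_cast_ne_zero hn hi)).symm]
  exact (Polynomial.homogenize_eq_of_isHomogeneous hf rfl).symm

theorem binaryForm_inj {n : ℕ} (hn : (n ! : K) ≠ 0) {a b : ℕ → K} :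
    binaryForm n a = binaryForm n b ↔ ∀ i ≤ n, a i = b i := by
  refine ⟨fun h i hi => ?_, binaryForm_congr⟩
  rw [← homogenize_binomialPoly, ← homogenize_binomialPoly] at h
  have hcoeff := congrArg (aeval ![(Polynomial.X : Polynomial K), 1]) h
  simp only [Polynomial.aeval_homogenize_X_one _ (natDegree_binomialPoly_le n _)] at hcoeff
  have := congrArg (Polynomial.coeff · i) hcoeff
  simpa only [coeff_binomialPoly, mul_right_inj' (choose_cast_ne_zero hn hi)] using this

/-- The coefficients of the product of two binary forms of degrees `m` and `n`. -/
def mulCoeff (m n : ℕ) (a b : ℕ → K) (i : ℕ) : K :=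
  (∑ kl ∈ antidiagonal i, (m.choose kl.1 * a kl.1) * (n.choose kl.2 * b kl.2)) / (m + n).choose i

theorem binaryForm_mul {m n : ℕ} (h : ((m + n)! : K) ≠ 0) (a b : ℕ → K) :
    binaryForm m a * binaryForm n b = binaryForm (m + n) (mulCoeff m n a b) := by
  rw [← homogenize_binomialPoly, ← homogenize_binomialPoly, ← Polynomial.homogenize_mul _ _
    (natDegree_binomialPoly_le m a) (natDegree_binomialPoly_le n b)]
  refine homogenize_eq_binaryForm fun i hi => ?_
  rw [mulCoeff, mul_div_cancel₀ _ (choose_cast_ne_zero h hi), Polynomial.coeff_mul]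
  simp only [coeff_binomialPoly]

theorem factorial_smul_omegaProcess_binaryForm (h m n : ℕ) (a b : ℕ → K) :
    ((m ! * n ! : ℕ) : K) • omegaProcess h (binaryForm (m + h) a) (binaryForm (n + h) b) =
      (((m + h)! * (n + h)! : ℕ) : K) • ∑ ij ∈ antidiagonal h, h.choose ij.1 • (-1 : ℤ) ^ ij.1 •
        (binaryForm m ((shift ^ ij.2) a) * binaryForm n ((shift ^ ij.1) b)) := by
  induction h generalizing a b with
  | zero => simp [omegaProcess_zero]
  | succ h ih =>
    rw [sum_antidiagonal_choose_succ_nsmul_add h fun i j => (-1 : ℤ) ^ i •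
      (binaryForm m ((shift ^ j) a) * binaryForm n ((shift ^ i) b))]
    have key : omegaProcess (h + 1) (binaryForm (m + h + 1) a) (binaryForm (n + h + 1) b) =
        (((m + h + 1) * (n + h + 1) : ℕ) : K) •
          (omegaProcess h (binaryForm (m + h) (shift a)) (binaryForm (n + h) b) -
            omegaProcess h (binaryForm (m + h) a) (binaryForm (n + h) (shift b))) := by
      simp only [omegaProcess_succ, pderiv_zero_binaryForm, pderiv_one_binaryForm, map_smul,
        LinearMap.smul_apply]
      push_cast
      module
    rw [← add_assoc, ← add_assoc, key, smul_comm, smul_sub, ih, ih, ← smul_sub, smul_smul,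
      ← sum_sub_distrib]
    congr 1
    · push_cast [factorial_succ]
      ring
    · refine sum_congr rfl fun ij _ => ?_
      simp only [pow_succ, Module.End.mul_apply, mul_neg_one, neg_smul, ← smul_sub,
        ← sub_eq_add_neg]

/-- The coefficients of `transvectant (m + h) (n + h) h` of two binary forms. -/
def transvectantCoeff (m n h : ℕ) (a b : ℕ → K) : ℕ → K :=
  ∑ pq ∈ antidiagonal h, h.choose pq.1 • (-1 : ℤ) ^ pq.1 •
    mulCoeff m n ((shift ^ pq.2) a) ((shift ^ pq.1) b)

theorem transvectant_binaryForm {m n h : ℕ} (hm : ((m + h)! : K) ≠ 0) (hn : ((n + h)! : K) ≠ 0)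
    (hmn : ((m + n)! : K) ≠ 0) (a b : ℕ → K) :
    transvectant (m + h) (n + h) h (binaryForm (m + h) a) (binaryForm (n + h) b) =
      binaryForm (m + n) (transvectantCoeff m n h a b) := by
  have hD : (((m + h)! * (n + h)! : ℕ) : K) ≠ 0 := by
    rw [cast_mul]
    exact mul_ne_zero hm hn
  rw [transvectant_eq_smul_omegaProcess, Nat.add_sub_cancel, Nat.add_sub_cancel, div_eq_inv_mul,
    mul_smul, factorial_smul_omegaProcess_binaryForm, smul_smul, inv_mul_cancel₀ hD, one_smul]
  simp only [binaryForm_mul hmn, transvectantCoeff, map_sum, map_nsmul, map_zsmul]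

end FieldCoefficients

section ExplicitCoefficients

variable {R : Type*} [CommRing R]

/-- The apolar pairing of binary forms of degree `n`, that is, their `n`-th transvectant. -/
def apolarPairing (n : ℕ) (a b : ℕ → R) : R :=
  ∑ ij ∈ antidiagonal n, n.choose ij.1 • (-1 : ℤ) ^ ij.1 • (a ij.2 * b ij.1)

theorem apolarPairing_four (a b : ℕ → R) : apolarPairing 4 a b =
    a 4 * b 0 - 4 * (a 3 * b 1) + 6 * (a 2 * b 2) - 4 * (a 1 * b 3) + a 0 * b 4 := by
  simp only [apolarPairing, Nat.sum_antidiagonal_eq_sum_range_succ_mk, sum_range_succ,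
    sum_range_zero, nsmul_eq_mul, zsmul_eq_mul]
  norm_num [Nat.choose]
  ring

theorem apolarPairing_eight (a b : ℕ → R) : apolarPairing 8 a b =
    a 8 * b 0 - 8 * (a 7 * b 1) + 28 * (a 6 * b 2) - 56 * (a 5 * b 3) + 70 * (a 4 * b 4) -
      56 * (a 3 * b 5) + 28 * (a 2 * b 6) - 8 * (a 1 * b 7) + a 0 * b 8 := by
  simp only [apolarPairing, Nat.sum_antidiagonal_eq_sum_range_succ_mk, sum_range_succ,
    sum_range_zero, nsmul_eq_mul, zsmul_eq_mul]
  norm_num [Nat.choose]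
  ring

/-- The coefficients of the quartic obtained by contracting an octic with a quartic. -/
def contractCoeff (a k : ℕ → R) (i : ℕ) : R :=
  apolarPairing 4 (fun j => a (i + j)) k

variable {K : Type*} [Field K]

theorem choose_mul_transvectantCoeff {m n i : ℕ} (h : ((m + n).choose i : K) ≠ 0) (k : ℕ)
    (a b : ℕ → K) : (m + n).choose i * transvectantCoeff m n k a b i =
      ∑ pq ∈ antidiagonal k, k.choose pq.1 • (-1 : ℤ) ^ pq.1 • ∑ rs ∈ antidiagonal i,
        m.choose rs.1 * a (rs.1 + pq.2) * (n.choose rs.2 * b (rs.2 + pq.1)) := by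
  simp only [transvectantCoeff, Finset.sum_apply, mul_sum, Pi.smul_apply, mul_smul_comm, mulCoeff,
    mul_div_cancel₀ _ h, shift_pow_apply]

theorem transvectantCoeff_zero_right {m i : ℕ} (h : (m.choose i : K) ≠ 0) (n : ℕ) (a b : ℕ → K) :
    transvectantCoeff m 0 n a b i = apolarPairing n (fun j => a (i + j)) b := by
  refine mul_left_cancel₀ h ((choose_mul_transvectantCoeff (n := 0) h n a b).trans ?_)
  rw [apolarPairing, mul_sum]
  refine sum_congr rfl fun pq _ => ?_
  rw [sum_eq_single (i, 0)]
  · simp only [choose_self, cast_one, zero_add, one_mul, mul_smul_comm, mul_assoc]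
  · rintro ⟨r, s⟩ hrs hne
    have hs : 0 < s := by
      rw [HasAntidiagonal.mem_antidiagonal] at hrs
      grind
    simp [choose_eq_zero_of_lt hs]
  · simp

/-- The coefficients of `covG` of an octic. -/
def gCoeff (a : ℕ → K) : ℕ → K :=
  transvectantCoeff 4 4 4 a a

/-- The coefficients of `covK` of an octic. -/
def kCoeff (a : ℕ → K) : ℕ → K :=
  transvectantCoeff 2 2 6 a a

/-- The coefficients of the Hessian `transvectant 4 4 2` of a quartic. -/
def hessianCoeff (k : ℕ → K) : ℕ → K :=
  transvectantCoeff 2 2 2 k k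

variable (h8 : ((8)! : K) ≠ 0)
include h8

-- The constants to be cancelled are products of primes up to `7`; the largest power is `96 ^ 3`.
theorem natCast_ne_zero {n : ℕ} (hn : n ∣ (8)! ^ 3) : (n : K) ≠ 0 := fun h => by
  obtain ⟨m, hm⟩ := hn
  have := pow_ne_zero 3 h8
  rw [← cast_pow, hm, cast_mul, h, zero_mul] at this
  exact this rfl

theorem natCast_mul_cancel {n : ℕ} (hn : n ∣ (8)! ^ 3) {x y : K} (h : (n : K) * x = n * y) :
    x = y :=
  mul_left_cancel₀ (natCast_ne_zero h8 hn) h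

theorem four_factorial_ne_zero : ((4)! : K) ≠ 0 :=
  natCast_ne_zero h8 (by decide)

theorem choose_four_mul_transvectantCoeff {i : ℕ} (hi : i ≤ 4) (n : ℕ) (a : ℕ → K) :
    Nat.choose 4 i * transvectantCoeff 2 2 n a a i =
      ∑ p ∈ range (n + 1), n.choose p * (-1) ^ p * ∑ r ∈ range (i + 1),
        Nat.choose 2 r * a (r + (n - p)) * (Nat.choose 2 (i - r) * a (i - r + p)) := by
  refine (choose_mul_transvectantCoeff (m := 2) (n := 2)
    (choose_cast_ne_zero (four_factorial_ne_zero h8) hi) n a a).trans ?_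
  simp [Nat.sum_antidiagonal_eq_sum_range_succ_mk, mul_assoc]

theorem kCoeff_zero (a : ℕ → K) :
    kCoeff a 0 = 2 * (a 0 * a 6 - 6 * (a 1 * a 5) + 15 * (a 2 * a 4) - 10 * a 3 ^ 2) := by
  rw [kCoeff]
  have h := choose_four_mul_transvectantCoeff h8 (i := 0) (by decide) 6 a
  norm_num [sum_range_succ, Nat.choose] at h
  linear_combination h

theorem kCoeff_one (a : ℕ → K) :
    kCoeff a 1 = a 0 * a 7 - 5 * (a 1 * a 6) + 9 * (a 2 * a 5) - 5 * (a 3 * a 4) := by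
  rw [kCoeff]
  have h := choose_four_mul_transvectantCoeff h8 (i := 1) (by decide) 6 a
  norm_num [sum_range_succ, Nat.choose] at h
  refine natCast_mul_cancel h8 (n := 4) (by decide) ?_
  linear_combination h

theorem three_mul_kCoeff_two (a : ℕ → K) : 3 * kCoeff a 2 =
    a 0 * a 8 - 2 * (a 1 * a 7) - 8 * (a 2 * a 6) + 34 * (a 3 * a 5) - 25 * a 4 ^ 2 := by
  rw [kCoeff]
  have h := choose_four_mul_transvectantCoeff h8 (i := 2) (by decide) 6 a
  norm_num [sum_range_succ, Nat.choose] at h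
  refine natCast_mul_cancel h8 (n := 2) (by decide) ?_
  linear_combination h

theorem kCoeff_three (a : ℕ → K) :
    kCoeff a 3 = a 1 * a 8 - 5 * (a 2 * a 7) + 9 * (a 3 * a 6) - 5 * (a 4 * a 5) := by
  rw [kCoeff]
  have h := choose_four_mul_transvectantCoeff h8 (i := 3) (by decide) 6 a
  norm_num [sum_range_succ, Nat.choose] at h
  refine natCast_mul_cancel h8 (n := 4) (by decide) ?_
  linear_combination h

theorem kCoeff_four (a : ℕ → K) :
    kCoeff a 4 = 2 * (a 2 * a 8 - 6 * (a 3 * a 7) + 15 * (a 4 * a 6) - 10 * a 5 ^ 2) := by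
  rw [kCoeff]
  have h := choose_four_mul_transvectantCoeff h8 (i := 4) (by decide) 6 a
  norm_num [sum_range_succ, Nat.choose] at h
  linear_combination h

theorem hessianCoeff_zero (k : ℕ → K) :
    hessianCoeff k 0 = 2 * (k 0 * k 2 - k 1 ^ 2) := by
  rw [hessianCoeff]
  have h := choose_four_mul_transvectantCoeff h8 (i := 0) (by decide) 2 k
  norm_num [sum_range_succ, Nat.choose] at h
  linear_combination h

theorem hessianCoeff_one (k : ℕ → K) :
    hessianCoeff k 1 = k 0 * k 3 - k 1 * k 2 := by
  rw [hessianCoeff]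
  have h := choose_four_mul_transvectantCoeff h8 (i := 1) (by decide) 2 k
  norm_num [sum_range_succ, Nat.choose] at h
  refine natCast_mul_cancel h8 (n := 4) (by decide) ?_
  linear_combination h

theorem three_mul_hessianCoeff_two (k : ℕ → K) :
    3 * hessianCoeff k 2 = k 0 * k 4 + 2 * (k 1 * k 3) - 3 * k 2 ^ 2 := by
  rw [hessianCoeff]
  have h := choose_four_mul_transvectantCoeff h8 (i := 2) (by decide) 2 k
  norm_num [sum_range_succ, Nat.choose] at h
  refine natCast_mul_cancel h8 (n := 2) (by decide) ?_
  linear_combination h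

theorem hessianCoeff_three (k : ℕ → K) :
    hessianCoeff k 3 = k 1 * k 4 - k 2 * k 3 := by
  rw [hessianCoeff]
  have h := choose_four_mul_transvectantCoeff h8 (i := 3) (by decide) 2 k
  norm_num [sum_range_succ, Nat.choose] at h
  refine natCast_mul_cancel h8 (n := 4) (by decide) ?_
  linear_combination h

theorem hessianCoeff_four (k : ℕ → K) :
    hessianCoeff k 4 = 2 * (k 2 * k 4 - k 3 ^ 2) := by
  rw [hessianCoeff]
  have h := choose_four_mul_transvectantCoeff h8 (i := 4) (by decide) 2 k
  norm_num [sum_range_succ, Nat.choose] at h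
  linear_combination h

theorem seventy_mul_gCoeff_four (a : ℕ → K) : 70 * gCoeff a 4 =
    2 * (a 0 * a 8) + 24 * (a 1 * a 7) - 44 * (a 2 * a 6) - 72 * (a 3 * a 5) + 90 * a 4 ^ 2 := by
  have h := choose_mul_transvectantCoeff (m := 4) (n := 4)
    (choose_cast_ne_zero h8 (i := 4) (by decide)) 4 a a
  norm_num [Nat.sum_antidiagonal_eq_sum_range_succ_mk, sum_range_succ, Nat.choose] at h
  rw [gCoeff]
  linear_combination h

end ExplicitCoefficients

section ExplicitInvariants

variable {K : Type*} [Field K]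

theorem constantCoeff_transvectant_binaryForm {n : ℕ} (hn : (n ! : K) ≠ 0) (a b : ℕ → K) :
    constantCoeff (transvectant n n n (binaryForm n a) (binaryForm n b)) =
      apolarPairing n a b := by
  have h := transvectant_binaryForm (m := 0) (n := 0) (h := n) (by rwa [zero_add])
    (by rwa [zero_add]) (by simp) a b
  rw [zero_add, add_zero] at h
  rw [h, binaryForm_zero, constantCoeff_C,
    transvectantCoeff_zero_right (by simp : (Nat.choose 0 0 : K) ≠ 0)]
  simp only [zero_add]

variable (h8 : ((8)! : K) ≠ 0)
include h8

theorem transvectant_four_two_binaryForm (k : ℕ → K) :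
    transvectant 4 4 2 (binaryForm 4 k) (binaryForm 4 k) = binaryForm 4 (hessianCoeff k) :=
  have h4 := four_factorial_ne_zero h8
  transvectant_binaryForm (m := 2) (n := 2) (h := 2) h4 h4 h4 k k

theorem transvectant_eight_four_binaryForm (a k : ℕ → K) :
    transvectant 8 4 4 (binaryForm 8 a) (binaryForm 4 k) = binaryForm 4 (contractCoeff a k) := by
  have h4 := four_factorial_ne_zero h8
  refine (transvectant_binaryForm (m := 4) (n := 0) (h := 4) h8 h4 h4 a k).trans ?_
  exact binaryForm_congr fun i hi =>
    transvectantCoeff_zero_right (choose_cast_ne_zero h4 hi) 4 a k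

theorem covG_binaryForm (a : ℕ → K) : covG (binaryForm 8 a) = binaryForm 8 (gCoeff a) :=
  transvectant_binaryForm (m := 4) (n := 4) (h := 4) h8 h8 h8 a a

theorem covK_binaryForm (a : ℕ → K) : covK (binaryForm 8 a) = binaryForm 4 (kCoeff a) :=
  transvectant_binaryForm (m := 2) (n := 2) (h := 6) h8 h8 (four_factorial_ne_zero h8) a a

theorem covH_binaryForm (a : ℕ → K) :
    covH (binaryForm 8 a) = binaryForm 4 (hessianCoeff (kCoeff a)) := by
  rw [covH, covK_binaryForm h8, transvectant_four_two_binaryForm h8]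

theorem shJ2_binaryForm (a : ℕ → K) : shJ2 (binaryForm 8 a) = apolarPairing 8 a a :=
  constantCoeff_transvectant_binaryForm h8 a a

theorem shJ4_binaryForm (a : ℕ → K) :
    shJ4 (binaryForm 8 a) = apolarPairing 4 (kCoeff a) (kCoeff a) := by
  rw [shJ4, covK_binaryForm h8,
    constantCoeff_transvectant_binaryForm (four_factorial_ne_zero h8)]

theorem shJ5_binaryForm (a : ℕ → K) : shJ5 (binaryForm 8 a) =
    apolarPairing 4 (contractCoeff a (kCoeff a)) (kCoeff a) := by
  rw [shJ5, covM, covK_binaryForm h8, transvectant_eight_four_binaryForm h8,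
    constantCoeff_transvectant_binaryForm (four_factorial_ne_zero h8)]

theorem shJ6_binaryForm (a : ℕ → K) : shJ6 (binaryForm 8 a) =
    apolarPairing 4 (kCoeff a) (hessianCoeff (kCoeff a)) := by
  rw [shJ6, covH_binaryForm h8, covK_binaryForm h8,
    constantCoeff_transvectant_binaryForm (four_factorial_ne_zero h8)]

theorem shJ7_binaryForm (a : ℕ → K) : shJ7 (binaryForm 8 a) =
    apolarPairing 4 (contractCoeff a (kCoeff a)) (hessianCoeff (kCoeff a)) := by
  rw [shJ7, covM, covH_binaryForm h8, covK_binaryForm h8, transvectant_eight_four_binaryForm h8,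
    constantCoeff_transvectant_binaryForm (four_factorial_ne_zero h8)]

theorem shJ8_binaryForm (a : ℕ → K) : shJ8 (binaryForm 8 a) =
    apolarPairing 4 (contractCoeff (gCoeff a) (kCoeff a)) (hessianCoeff (kCoeff a)) := by
  rw [shJ8, covP, covH_binaryForm h8, covG_binaryForm h8, covK_binaryForm h8,
    transvectant_eight_four_binaryForm h8,
    constantCoeff_transvectant_binaryForm (four_factorial_ne_zero h8)]

theorem shJ9_binaryForm (a : ℕ → K) : shJ9 (binaryForm 8 a) =
    apolarPairing 4 (contractCoeff a (hessianCoeff (kCoeff a))) (hessianCoeff (kCoeff a)) := by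
  rw [shJ9, covN, covH_binaryForm h8, transvectant_eight_four_binaryForm h8,
    constantCoeff_transvectant_binaryForm (four_factorial_ne_zero h8)]

theorem shJ10_binaryForm (a : ℕ → K) : shJ10 (binaryForm 8 a) = apolarPairing 4
    (contractCoeff (gCoeff a) (hessianCoeff (kCoeff a))) (hessianCoeff (kCoeff a)) := by
  rw [shJ10, covQ, covH_binaryForm h8, covG_binaryForm h8, transvectant_eight_four_binaryForm h8,
    constantCoeff_transvectant_binaryForm (four_factorial_ne_zero h8)]

end ExplicitInvariants

section Substitution

variable {R : Type*} [CommRing R]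

theorem linSubstCoeff_self (M : Matrix (Fin 2) (Fin 2) R) (n : ℕ) (a : ℕ → R) :
    linSubstCoeff M n a n = eval (M.mulVec ![1, 0]) (binaryForm n a) := by
  rw [← eval_linSubst, linSubst_binaryForm, eval_binaryForm]

theorem eval_binaryForm_one_right (n : ℕ) (a : ℕ → R) (t : R) :
    eval ![t, 1] (binaryForm n a) = (binomialPoly n a).eval t := by
  simp [binaryForm_apply, binomialPoly, Polynomial.eval_finsetSum]

theorem linSubstCoeff_shear (s : R) (n : ℕ) (a : ℕ → R) (i : ℕ) :
    linSubstCoeff !![1, s; 0, 1] n a i =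
      ∑ j ∈ range (n - i + 1), (n - i).choose j * s ^ j * a (i + j) := by
  have h : linSubstCoeff !![1, s; 0, 1] n a i =
      ((s • shift + 1) ^ (n - i) : Module.End R (ℕ → R)) ((shift ^ i) a) 0 := by
    simp [linSubstCoeff, add_comm]
  rw [h, (Commute.one_right _).add_pow]
  simp [smul_pow, shift_pow_apply, LinearMap.sum_apply, add_comm i, mul_comm, mul_left_comm]

theorem linSubstCoeff_shear_eq_self {n i : ℕ} (hi : i ≤ n) {a : ℕ → R}
    (ha : ∀ j, i < j → j ≤ n → a j = 0) (s : R) : linSubstCoeff !![1, s; 0, 1] n a i = a i := by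
  rw [linSubstCoeff_shear, sum_range_succ', sum_eq_zero fun j hj => ?_]
  · simp
  · rw [ha _ (by grind) (by grind), mul_zero]

theorem linSubstCoeff_shear_eq_add (m : ℕ) {i : ℕ} {a : ℕ → R}
    (ha : ∀ j, i + 1 < j → j ≤ i + (m + 1) → a j = 0) (s : R) :
    linSubstCoeff !![1, s; 0, 1] (i + (m + 1)) a i = a i + (m + 1 : ℕ) * s * a (i + 1) := by
  rw [linSubstCoeff_shear, Nat.add_sub_cancel_left, sum_range_succ', sum_range_succ',
    sum_eq_zero fun j hj => ?_]
  · simp [add_comm]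
  · rw [ha _ (by grind) (by grind), mul_zero]

variable {K : Type*} [Field K]

theorem exists_linSubstCoeff_shear_eq_zero {m i : ℕ} (hm : ((m + 1 : ℕ) : K) ≠ 0) {a : ℕ → K}
    (ha : ∀ j, i + 1 < j → j ≤ i + (m + 1) → a j = 0) (hne : a (i + 1) ≠ 0) :
    ∃ s, linSubstCoeff !![1, s; 0, 1] (i + (m + 1)) a i = 0 := by
  refine ⟨-a i / ((m + 1 : ℕ) * a (i + 1)), ?_⟩
  rw [linSubstCoeff_shear_eq_add m ha]
  generalize ((m + 1 : ℕ) : K) = c at hm ⊢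
  field_simp
  ring

theorem linSubstCoeff_mul {n : ℕ} (hn : (n ! : K) ≠ 0) (M N : Matrix (Fin 2) (Fin 2) K)
    (a : ℕ → K) {i : ℕ} (hi : i ≤ n) :
    linSubstCoeff N n (linSubstCoeff M n a) i = linSubstCoeff (M * N) n a i := by
  refine (binaryForm_inj hn).mp ?_ i hi
  simp only [← linSubst_binaryForm, linSubst_linSubst]

theorem exists_linSubstCoeff_self_eq_zero [IsAlgClosed K] {n : ℕ} (hn : n ≠ 0) (a : ℕ → K) :
    ∃ M : Matrix (Fin 2) (Fin 2) K, IsUnit M.det ∧ linSubstCoeff M n a n = 0 := by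
  by_cases ha : a n = 0
  · exact ⟨1, by simp, by rw [linSubstCoeff_self, Matrix.one_mulVec, eval_binaryForm, ha]⟩
  have hcoeff : (binomialPoly n a).coeff n ≠ 0 := by
    rwa [coeff_binomialPoly, choose_self, cast_one, one_mul]
  obtain ⟨t, ht⟩ := IsAlgClosed.exists_root (binomialPoly n a) fun h => hn <|
    Nat.eq_zero_of_le_zero <| (Polynomial.le_natDegree_of_ne_zero hcoeff).trans
      (Polynomial.natDegree_eq_zero_iff_degree_le_zero.mpr h.le).le
  refine ⟨!![t, 1; 1, 0], by simp, ?_⟩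
  have hv : !![t, 1; 1, 0].mulVec ![1, 0] = ![t, 1] := by
    ext i
    fin_cases i <;> simp
  rw [linSubstCoeff_self, hv, eval_binaryForm_one_right]
  exact ht

theorem exists_sq_eq_and_cube_eq {x y : K} (h : y ^ 2 = x ^ 3) : ∃ s, s ^ 2 = x ∧ s ^ 3 = y := by
  by_cases hx : x = 0
  · rw [hx, zero_pow three_ne_zero] at h
    exact ⟨0, by rw [hx, zero_pow two_ne_zero],
      by rw [pow_eq_zero_iff two_ne_zero |>.mp h, zero_pow three_ne_zero]⟩
  · exact ⟨y / x, by rw [div_pow, h, pow_succ, mul_div_cancel_left₀ _ (pow_ne_zero 2 hx)],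
      by rw [div_pow, ← h, pow_succ, mul_div_cancel_left₀ _ (h ▸ pow_ne_zero 3 hx)]⟩

end Substitution

section Quartic

variable {K : Type*} [Field K]

/-- The property of a binary quartic of having a multiple root, expressed by moving that root to
`Z = 0`. -/
def HasMultipleRoot (k : ℕ → K) : Prop :=
  ∃ M : Matrix (Fin 2) (Fin 2) K, IsUnit M.det ∧
    linSubstCoeff M 4 k 3 = 0 ∧ linSubstCoeff M 4 k 4 = 0

/-- The vanishing of the discriminant of a binary quartic, in terms of its two basic invariants. -/
def DiscrEqZero (k : ℕ → K) : Prop :=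
  apolarPairing 4 k k ^ 3 = 6 * apolarPairing 4 k (hessianCoeff k) ^ 2

variable (h8 : ((8)! : K) ≠ 0)
include h8

theorem HasMultipleRoot.of_linSubstCoeff {k : ℕ → K} {M : Matrix (Fin 2) (Fin 2) K}
    (hM : IsUnit M.det) (h : HasMultipleRoot (linSubstCoeff M 4 k)) : HasMultipleRoot k := by
  obtain ⟨N, hN, h3, h4⟩ := h
  have hmul {i} (hi : i ≤ 4) := linSubstCoeff_mul (four_factorial_ne_zero h8) M N k hi
  exact ⟨M * N, by rw [Matrix.det_mul]; exact hM.mul hN,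
    by rw [← hmul (by decide), h3], by rw [← hmul (by decide), h4]⟩

theorem apolarPairing_linSubstCoeff (M : Matrix (Fin 2) (Fin 2) K) (k : ℕ → K) :
    apolarPairing 4 (linSubstCoeff M 4 k) (linSubstCoeff M 4 k) =
      M.det ^ 4 * apolarPairing 4 k k := by
  have h := (isCovariant_id.transvectant isCovariant_id 4 4 4).isRelativeInvariant M
    (binaryForm 4 k)
  simpa only [linSubst_binaryForm,
    constantCoeff_transvectant_binaryForm (four_factorial_ne_zero h8)] using h

theorem apolarPairing_hessianCoeff_linSubstCoeff (M : Matrix (Fin 2) (Fin 2) K) (k : ℕ → K) :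
    apolarPairing 4 (linSubstCoeff M 4 k) (hessianCoeff (linSubstCoeff M 4 k)) =
      M.det ^ 6 * apolarPairing 4 k (hessianCoeff k) := by
  have h := (isCovariant_id.transvectant (isCovariant_id.transvectant isCovariant_id 4 4 2)
    4 4 4).isRelativeInvariant M (binaryForm 4 k)
  simpa only [linSubst_binaryForm, transvectant_four_two_binaryForm h8,
    constantCoeff_transvectant_binaryForm (four_factorial_ne_zero h8)] using h

theorem DiscrEqZero.linSubstCoeff {k : ℕ → K} (hk : DiscrEqZero k)
    (M : Matrix (Fin 2) (Fin 2) K) : DiscrEqZero (linSubstCoeff M 4 k) := by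
  rw [DiscrEqZero] at hk ⊢
  rw [apolarPairing_linSubstCoeff h8, apolarPairing_hessianCoeff_linSubstCoeff h8]
  linear_combination M.det ^ 12 * hk

theorem hasMultipleRoot_of_depressed {k : ℕ → K} (hk : DiscrEqZero k) (k2 : k 2 = 0)
    (k4 : k 4 = 0) : HasMultipleRoot k := by
  by_cases k3 : k 3 = 0
  · exact ⟨1, by simp, by simpa [linSubstCoeff, shift_pow_apply],
      by simpa [linSubstCoeff, shift_pow_apply]⟩
  have hcubic : 64 * k 1 ^ 3 + 27 * k 0 ^ 2 * k 3 = 0 := by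
    rw [DiscrEqZero, apolarPairing_four, apolarPairing_four, hessianCoeff_one h8,
      hessianCoeff_four h8, hessianCoeff_three h8, k2, k4] at hk
    refine mul_left_cancel₀ (pow_ne_zero 3 k3) <|
      natCast_mul_cancel h8 (n := 8) (by decide) ?_
    linear_combination -hk
  have n3 : (3 : K) ≠ 0 := mod_cast natCast_ne_zero h8 (n := 3) (by decide)
  have n8 : (8 : K) ≠ 0 := mod_cast natCast_ne_zero h8 (n := 8) (by decide)
  obtain ⟨z, hz2, hz3⟩ := exists_sq_eq_and_cube_eq
    (x := -k 1 / (3 * k 3)) (y := k 0 / (8 * k 3)) (by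
      field_simp
      linear_combination hcubic)
  rw [eq_div_iff (mul_ne_zero n3 k3)] at hz2
  rw [eq_div_iff (mul_ne_zero n8 k3)] at hz3
  -- The quartic is `4 k₃ Z (X - z Z)² (X + 2 z Z)`.
  refine ⟨!![z, 1; 1, 0], by simp, ?_, ?_⟩
  · calc linSubstCoeff !![z, 1; 1, 0] 4 k 3 = k 1 + 3 * z ^ 2 * k 3 := by
          simp [linSubstCoeff, pow_succ, shift_apply, k2, k4]; ring
      _ = 0 := by linear_combination hz2
  · calc linSubstCoeff !![z, 1; 1, 0] 4 k 4 = k 0 + 4 * z * k 1 + 4 * z ^ 3 * k 3 := by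
          simp [linSubstCoeff, pow_succ, shift_apply, k2, k4]; ring
      _ = 0 := by linear_combination 4 * z * hz2 - hz3

theorem hasMultipleRoot_of_discrEqZero [IsAlgClosed K] {k : ℕ → K} (hk : DiscrEqZero k) :
    HasMultipleRoot k := by
  obtain ⟨M, hM, hroot⟩ := exists_linSubstCoeff_self_eq_zero four_ne_zero k
  refine .of_linSubstCoeff h8 hM ?_
  replace hk := hk.linSubstCoeff h8 M
  generalize linSubstCoeff M 4 k = k at *
  by_cases k3 : k 3 = 0
  · exact ⟨1, by simp, by simpa [linSubstCoeff, shift_pow_apply],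
      by simpa [linSubstCoeff, shift_pow_apply]⟩
  obtain ⟨s, hs⟩ := exists_linSubstCoeff_shear_eq_zero (m := 1) (i := 2)
    (natCast_ne_zero h8 (by decide)) (fun j hj hj' => by grind) k3
  refine .of_linSubstCoeff h8 (by simp)
    (hasMultipleRoot_of_depressed h8 (hk.linSubstCoeff h8 _) hs ?_)
  rw [linSubstCoeff_shear_eq_self le_rfl (fun j hj hj' => by grind), hroot]

end Quartic

section Equivalence

variable {R : Type*} [CommRing R]

/-- `GL₂`-equivalence of binary forms. -/
def GLEquiv (f g : MvPolynomial (Fin 2) R) : Prop :=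
  ∃ M : Matrix (Fin 2) (Fin 2) R, IsUnit M.det ∧ f = linSubst M g

theorem GLEquiv.of_linSubst {f g : MvPolynomial (Fin 2) R} {M : Matrix (Fin 2) (Fin 2) R}
    (hM : IsUnit M.det) (h : GLEquiv (linSubst M f) g) : GLEquiv f g := by
  obtain ⟨N, hN, h⟩ := h
  refine ⟨N * M⁻¹, ?_, ?_⟩
  · rw [Matrix.det_mul]
    exact hN.mul (Matrix.isUnit_nonsing_inv_det M hM)
  · rw [← linSubst_linSubst, ← h, linSubst_inv_linSubst hM]

/-- The model octic `X⁷Z - XZ⁷`. -/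
noncomputable def modelOctic : MvPolynomial (Fin 2) R :=
  X 0 ^ 7 * X 1 - X 0 * X 1 ^ 7

theorem linSubst_diagonal_modelOctic (s t : R) : linSubst !![s, 0; 0, t] modelOctic =
    C (s ^ 7 * t) * (X 0 ^ 7 * X 1) - C (s * t ^ 7) * (X 0 * X 1 ^ 7) := by
  simp only [modelOctic, map_sub, map_mul, map_pow, linSubst_X, Fin.sum_univ_two,
    Matrix.cons_val', Matrix.cons_val_zero, Matrix.cons_val_one, Matrix.cons_val_fin_one,
    Matrix.of_apply, map_zero, zero_mul, add_zero, zero_add]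
  ring

theorem C_ofNat_eq {σ : Type*} (n : ℕ) [n.AtLeastTwo] :
    (C ofNat(n) : MvPolynomial σ R) = ofNat(n) :=
  map_ofNat C n

theorem binaryForm_eight_of_sparse {a : ℕ → R} (a0 : a 0 = 0) (a2 : a 2 = 0) (a3 : a 3 = 0)
    (a4 : a 4 = 0) (a5 : a 5 = 0) (a6 : a 6 = 0) (a8 : a 8 = 0) :
    binaryForm 8 a = C (8 * a 1) * (X 0 * X 1 ^ 7) + C (8 * a 7) * (X 0 ^ 7 * X 1) := by
  simp [binaryForm_apply, sum_range_succ, a0, a2, a3, a4, a5, a6, a8, C_ofNat_eq]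

theorem constantCoeff_ne_zero_of_mul_self_dvd {σ : Type*} [Nontrivial R] {f q : MvPolynomial σ R}
    (hf : Squarefree f) (hq : q * q ∣ f) : constantCoeff q ≠ 0 :=
  ((hf q hq).map constantCoeff).ne_zero

theorem X_one_sq_dvd_binaryForm {n : ℕ} {a : ℕ → R} (h₁ : a (n + 1) = 0) (h₂ : a (n + 2) = 0) :
    X 1 * X 1 ∣ binaryForm (n + 2) a := by
  rw [binaryForm_apply]
  refine dvd_sum fun i hi => ?_
  obtain hi' | rfl | rfl : i ≤ n ∨ i = n + 1 ∨ i = n + 2 := by grind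
  · rw [← sq]
    exact ((pow_dvd_pow _ (by grind)).mul_left _).mul_left _
  · simp [h₁]
  · simp [h₂]

variable {K : Type*} [Field K]

/-- Relations between Shioda invariants that cut out the orbit of `modelOctic` among squarefree
octics. -/
structure U6Relations (f : MvPolynomial (Fin 2) K) : Prop where
  shJ4 : 96 * shJ4 f = shJ2 f ^ 2
  shJ6 : 2304 * shJ6 f = -(shJ2 f ^ 3)
  shJ8 : 17920 * shJ8 f = shJ2 f ^ 4
  shJ5 : shJ5 f = 0
  shJ7 : shJ7 f = 0
  shJ9 : shJ9 f = 0

theorem U6Relations.linSubst {f : MvPolynomial (Fin 2) K} (hf : U6Relations f)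
    (M : Matrix (Fin 2) (Fin 2) K) : U6Relations (linSubst M f) where
  shJ4 := by
    rw [isRelativeInvariant_shJ4, isRelativeInvariant_shJ2]
    linear_combination M.det ^ 16 * hf.shJ4
  shJ6 := by
    rw [isRelativeInvariant_shJ6, isRelativeInvariant_shJ2]
    linear_combination M.det ^ 24 * hf.shJ6
  shJ8 := by
    rw [isRelativeInvariant_shJ8, isRelativeInvariant_shJ2]
    linear_combination M.det ^ 32 * hf.shJ8
  shJ5 := by rw [isRelativeInvariant_shJ5, hf.shJ5, mul_zero]
  shJ7 := by rw [isRelativeInvariant_shJ7, hf.shJ7, mul_zero]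
  shJ9 := by rw [isRelativeInvariant_shJ9, hf.shJ9, mul_zero]

/-- The coefficients of a squarefree octic that satisfies the relations `U6Relations`. -/
structure IsU6Octic (a : ℕ → K) : Prop where
  squarefree : Squarefree (binaryForm 8 a)
  relations : U6Relations (binaryForm 8 a)

theorem IsU6Octic.linSubstCoeff {a : ℕ → K} (ha : IsU6Octic a) {M : Matrix (Fin 2) (Fin 2) K}
    (hM : IsUnit M.det) : IsU6Octic (linSubstCoeff M 8 a) where
  squarefree := by
    rw [← linSubst_binaryForm]
    exact squarefree_linSubst hM ha.squarefree
  relations := by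
    rw [← linSubst_binaryForm]
    exact ha.relations.linSubst M

theorem kCoeff_linSubstCoeff (h8 : ((8)! : K) ≠ 0) (M : Matrix (Fin 2) (Fin 2) K) (a : ℕ → K)
    {i : ℕ} (hi : i ≤ 4) :
    kCoeff (linSubstCoeff M 8 a) i = M.det ^ 6 * linSubstCoeff M 4 (kCoeff a) i := by
  have h := isCovariant_covK M (binaryForm 8 a)
  rw [linSubst_binaryForm, covK_binaryForm h8, covK_binaryForm h8, linSubst_binaryForm,
    ← map_smul] at h
  exact (binaryForm_inj (four_factorial_ne_zero h8)).mp h i hi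

theorem IsU6Octic.coeff_seven_ne_zero {a : ℕ → K} (ha : IsU6Octic a) (a8 : a 8 = 0) : a 7 ≠ 0 :=
  fun a7 => constantCoeff_ne_zero_of_mul_self_dvd ha.squarefree
    (X_one_sq_dvd_binaryForm (n := 6) a7 a8) (constantCoeff_X _ _)

theorem gLEquiv_modelOctic [IsAlgClosed K] {u v : K} (hu : u ≠ 0) (hv : v ≠ 0) :
    GLEquiv (C u * (X 0 * X 1 ^ 7) + C v * (X 0 ^ 7 * X 1)) modelOctic := by
  obtain ⟨t, ht⟩ := IsAlgClosed.exists_pow_nat_eq (-(v ^ 7 / u)) (n := 48) (by decide)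
  have ht0 : t ≠ 0 := by
    rintro rfl
    rw [zero_pow (by decide), zero_eq_neg] at ht
    exact div_ne_zero (pow_ne_zero 7 hv) hu ht
  refine ⟨!![t, 0; 0, v / t ^ 7], by simp [ht0, hv], ?_⟩
  have hZ : t * (v / t ^ 7) ^ 7 = -u := by
    field_simp at ht ⊢
    linear_combination ht
  have hX : t ^ 7 * (v / t ^ 7) = v := mul_div_cancel₀ _ (pow_ne_zero 7 ht0)
  rw [linSubst_diagonal_modelOctic, hX, hZ, map_neg]
  ring

end Equivalence

section DoubleRoot

variable {K : Type*} [Field K]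

/-- The normal form `6 k₂ X² Z² + k₀ Z⁴` of a quartic with a multiple root at `Z = 0`. -/
structure IsReducedQuartic (k : ℕ → K) : Prop where
  k1 : k 1 = 0
  k3 : k 3 = 0
  k4 : k 4 = 0

theorem IsReducedQuartic.apolarPairing_eq {k l : ℕ → K} (hk : IsReducedQuartic k)
    (hl : IsReducedQuartic l) : apolarPairing 4 k l = 6 * (k 2 * l 2) := by
  rw [apolarPairing_four, hk.k1, hk.k3, hk.k4, hl.k4]
  ring

theorem IsReducedQuartic.apolarPairing_contractCoeff {k l : ℕ → K} (hk : IsReducedQuartic k)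
    (hl : IsReducedQuartic l) (a : ℕ → K) : apolarPairing 4 (contractCoeff a k) l =
      k 0 * l 0 * a 8 + 6 * (k 2 * l 0 + k 0 * l 2) * a 6 + 36 * (k 2 * l 2) * a 4 := by
  simp only [apolarPairing_four, contractCoeff, hk.k1, hk.k3, hk.k4, hl.k1, hl.k3, hl.k4]
  ring

/-- The equations on the coefficients of an octic to which `U6Relations` reduce when `covK` is a
nonzero multiple of `X² Z²`. -/
structure IsBalanced (a : ℕ → K) : Prop where
  a4 : a 4 = 0
  k0 : a 0 * a 6 = 6 * (a 1 * a 5) + 10 * a 3 ^ 2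
  k1 : a 0 * a 7 = 5 * (a 1 * a 6) - 9 * (a 2 * a 5)
  k3 : a 1 * a 8 = 5 * (a 2 * a 7) - 9 * (a 3 * a 6)
  k4 : a 2 * a 8 = 6 * (a 3 * a 7) + 10 * a 5 ^ 2
  mid₀ : a 0 * a 8 = 16 * (a 3 * a 5)
  mid₂ : a 2 * a 6 = 4 * (a 3 * a 5)
  k2 : a 1 * a 7 ≠ 9 * (a 3 * a 5)

theorem IsBalanced.reverse {a : ℕ → K} (ha : IsBalanced a) : IsBalanced fun i => a (8 - i) where
  a4 := ha.a4
  k0 := by linear_combination ha.k4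
  k1 := by linear_combination ha.k3
  k3 := by linear_combination ha.k1
  k4 := by linear_combination ha.k0
  mid₀ := by linear_combination ha.mid₀
  mid₂ := by linear_combination ha.mid₂
  k2 h := ha.k2 (by linear_combination h)

variable (h8 : ((8)! : K) ≠ 0)
include h8

theorem IsReducedQuartic.hessianCoeff_two {k : ℕ → K} (hk : IsReducedQuartic k) :
    hessianCoeff k 2 = -k 2 ^ 2 := by
  have h := three_mul_hessianCoeff_two h8 k
  rw [hk.k1, hk.k4] at h
  refine natCast_mul_cancel h8 (n := 3) (by decide) ?_
  linear_combination h

theorem IsReducedQuartic.hessianCoeff_zero {k : ℕ → K} (hk : IsReducedQuartic k) :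
    hessianCoeff k 0 = 2 * (k 0 * k 2) := by
  rw [_root_.hessianCoeff_zero h8, hk.k1]
  ring

theorem IsReducedQuartic.hessianCoeff {k : ℕ → K} (hk : IsReducedQuartic k) :
    IsReducedQuartic (hessianCoeff k) where
  k1 := by rw [hessianCoeff_one h8, hk.k1, hk.k3]; ring
  k3 := by rw [hessianCoeff_three h8, hk.k3, hk.k4]; ring
  k4 := by rw [hessianCoeff_four h8, hk.k3, hk.k4]; ring

namespace IsU6Octic

variable {a : ℕ → K} (ha : IsU6Octic a)
include ha

theorem discrEqZero_kCoeff : DiscrEqZero (kCoeff a) := by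
  have h4 := ha.relations.shJ4
  have h6 := ha.relations.shJ6
  rw [shJ4_binaryForm h8] at h4
  rw [shJ6_binaryForm h8] at h6
  refine natCast_mul_cancel h8 (n := 96 ^ 3) (by decide) ?_
  calc _ = (96 * apolarPairing 4 (kCoeff a) (kCoeff a)) ^ 3 := by push_cast; ring
    _ = (2304 * apolarPairing 4 (kCoeff a) (hessianCoeff (kCoeff a))) ^ 2 := by rw [h4, h6]; ring
    _ = _ := by push_cast; ring

variable (hk : IsReducedQuartic (kCoeff a))
include hk

theorem shJ2_eq (k2 : kCoeff a 2 ≠ 0) : shJ2 (binaryForm 8 a) = 24 * kCoeff a 2 := by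
  have h4 := ha.relations.shJ4
  have h6 := ha.relations.shJ6
  rw [shJ4_binaryForm h8, hk.apolarPairing_eq hk] at h4
  rw [shJ6_binaryForm h8, hk.apolarPairing_eq (hk.hessianCoeff h8), hk.hessianCoeff_two h8] at h6
  refine mul_left_cancel₀ (pow_ne_zero 2 k2) <| natCast_mul_cancel h8 (n := 576) (by decide) ?_
  linear_combination shJ2 (binaryForm 8 a) * h4 + h6

theorem sparse_of_isReducedQuartic (k2 : kCoeff a 2 ≠ 0) :
    kCoeff a 0 ^ 2 * a 8 = 0 ∧ kCoeff a 0 * a 6 = 0 ∧ a 4 = 0 := by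
  have h5 := ha.relations.shJ5
  have h7 := ha.relations.shJ7
  have h9 := ha.relations.shJ9
  have hh := hk.hessianCoeff h8
  rw [shJ5_binaryForm h8, hk.apolarPairing_contractCoeff hk] at h5
  rw [shJ7_binaryForm h8, hk.apolarPairing_contractCoeff hh, hk.hessianCoeff_zero h8,
    hk.hessianCoeff_two h8] at h7
  rw [shJ9_binaryForm h8, hh.apolarPairing_contractCoeff hh, hk.hessianCoeff_zero h8,
    hk.hessianCoeff_two h8] at h9
  generalize kCoeff a 0 = k₀ at *
  generalize kCoeff a 2 = c at *
  replace h7 : 2 * (k₀ ^ 2 * a 8) + 6 * (c * (k₀ * a 6)) - 36 * (c ^ 2 * a 4) = 0 :=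
    mul_left_cancel₀ k2 (by linear_combination h7)
  replace h9 : 4 * (k₀ ^ 2 * a 8) - 24 * (c * (k₀ * a 6)) + 36 * (c ^ 2 * a 4) = 0 :=
    mul_left_cancel₀ (pow_ne_zero 2 k2) (by linear_combination h9)
  have a8 : k₀ ^ 2 * a 8 = 0 := natCast_mul_cancel h8 (n := 9) (by decide)
    (by linear_combination h5 + 2 * h7 + h9)
  have a6 : k₀ * a 6 = 0 := mul_left_cancel₀ k2 <|
    natCast_mul_cancel h8 (n := 18) (by decide) (by linear_combination h5 + h7 - 3 * a8)
  refine ⟨a8, a6, mul_left_cancel₀ (pow_ne_zero 2 k2) <|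
    natCast_mul_cancel h8 (n := 36) (by decide) ?_⟩
  linear_combination h5 - a8 - 12 * c * a6

theorem kCoeff_zero_eq_zero (k2 : kCoeff a 2 ≠ 0) : kCoeff a 0 = 0 := by
  by_contra k0
  obtain ⟨a8, a6, a4⟩ := ha.sparse_of_isReducedQuartic h8 hk k2
  replace a8 : a 8 = 0 := (mul_eq_zero_iff_left (pow_ne_zero 2 k0)).mp a8
  replace a6 : a 6 = 0 := (mul_eq_zero_iff_left k0).mp a6
  have a7 := ha.coeff_seven_ne_zero a8
  have hJ := ha.shJ2_eq h8 hk k2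
  have h0 := kCoeff_zero h8 a
  have h2 := three_mul_kCoeff_two h8 a
  have h3 := kCoeff_three h8 a
  have h4 := kCoeff_four h8 a
  rw [shJ2_binaryForm h8, apolarPairing_eight, a4, a6, a8] at hJ
  rw [a4, a6] at h0
  rw [a4, a6, a8] at h2
  rw [hk.k3, a4, a6, a8] at h3
  rw [hk.k4, a4, a6, a8] at h4
  have a2 : a 2 = 0 := mul_right_cancel₀ a7 <|
    natCast_mul_cancel h8 (n := 5) (by decide) (by linear_combination h3)
  have a35 : a 3 * a 5 = 0 := natCast_mul_cancel h8 (n := 384) (by decide)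
    (by linear_combination -hJ - 8 * h2)
  have a5 : a 5 = 0 := pow_eq_zero_iff three_ne_zero |>.mp <|
    natCast_mul_cancel h8 (n := 20) (by decide) (by linear_combination a 5 * h4 - 12 * a 7 * a35)
  have a3 : a 3 = 0 := mul_right_cancel₀ a7 <|
    natCast_mul_cancel h8 (n := 12) (by decide) (by rw [a5] at h4; linear_combination h4)
  rw [a3, a5] at h0
  exact k0 (by linear_combination h0)

theorem seventy_mul_gCoeff_four_eq (k2 : kCoeff a 2 ≠ 0) :
    70 * gCoeff a 4 = -36 * kCoeff a 2 := by
  have hJ8 := ha.relations.shJ8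
  rw [ha.shJ2_eq h8 hk k2, shJ8_binaryForm h8, hk.apolarPairing_contractCoeff (hk.hessianCoeff h8),
    hk.hessianCoeff_zero h8, hk.hessianCoeff_two h8, ha.kCoeff_zero_eq_zero h8 hk k2] at hJ8
  refine mul_left_cancel₀ (pow_ne_zero 3 k2) <|
    natCast_mul_cancel h8 (n := 9216) (by decide) ?_
  linear_combination -hJ8

theorem isBalanced (k2 : kCoeff a 2 ≠ 0) : IsBalanced a := by
  have k0 := ha.kCoeff_zero_eq_zero h8 hk k2
  obtain ⟨-, -, a4⟩ := ha.sparse_of_isReducedQuartic h8 hk k2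
  have hJ := ha.shJ2_eq h8 hk k2
  have h2 := three_mul_kCoeff_two h8 a
  have hg := ha.seventy_mul_gCoeff_four_eq h8 hk k2
  rw [seventy_mul_gCoeff_four h8, a4] at hg
  rw [shJ2_binaryForm h8, apolarPairing_eight, a4] at hJ
  rw [a4] at h2
  have mid₂ : a 2 * a 6 = 4 * (a 3 * a 5) :=
    natCast_mul_cancel h8 (n := 420) (by decide) (by linear_combination 7 * hJ + 20 * h2 + 3 * hg)
  have mid₁ : 2 * (a 1 * a 7) = 18 * (a 3 * a 5) - 3 * kCoeff a 2 :=
    natCast_mul_cancel h8 (n := 20) (by decide) (by linear_combination hg - hJ + 100 * mid₂)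
  refine ⟨a4, ?_, ?_, ?_, ?_, ?_, mid₂, fun h => k2 ?_⟩
  · refine natCast_mul_cancel h8 (n := 2) (by decide) ?_
    have := kCoeff_zero h8 a
    rw [k0, a4] at this
    linear_combination -this
  · have := kCoeff_one h8 a
    rw [hk.k1, a4] at this
    linear_combination -this
  · have := kCoeff_three h8 a
    rw [hk.k3, a4] at this
    linear_combination -this
  · refine natCast_mul_cancel h8 (n := 2) (by decide) ?_
    have := kCoeff_four h8 a
    rw [hk.k4, a4] at this
    linear_combination -this
  · linear_combination -h2 + mid₁ + 8 * mid₂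
  · refine natCast_mul_cancel h8 (n := 3) (by decide) ?_
    linear_combination mid₁ - 2 * h

end IsU6Octic

end DoubleRoot

namespace IsBalanced

variable {K : Type*} [Field K] {a : ℕ → K} (ha : IsBalanced a)
include ha

theorem six_mul_coeff_two_one_five :
    6 * (a 2 * (a 1 * a 5)) = a 3 * (4 * (a 0 * a 5) - 10 * (a 2 * a 3)) := by
  linear_combination a 0 * ha.mid₂ - a 2 * ha.k0

theorem six_mul_coeff_zero_three_seven :
    6 * (a 0 * (a 3 * a 7)) = a 5 * (16 * (a 2 * a 3) - 10 * (a 0 * a 5)) := by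
  linear_combination a 2 * ha.mid₀ - a 0 * ha.k4

variable (h8 : ((8)! : K) ≠ 0)
include h8

theorem coeff_zero_mul_coeff_five_eq (h3 : a 3 ≠ 0) (h5 : a 5 ≠ 0) :
    a 0 * a 5 = -2 * (a 2 * a 3) := by
  have e15 := ha.six_mul_coeff_two_one_five
  have e37 := ha.six_mul_coeff_zero_three_seven
  have h133 : 12 * (a 1 * a 3 ^ 2) = a 2 * (7 * (a 2 * a 3) - a 0 * a 5) := by
    refine mul_left_cancel₀ h5 <| natCast_mul_cancel h8 (n := 10) (by decide) ?_
    linear_combination a 2 * e37 - 6 * a 2 * a 3 * ha.k1 - 30 * a 1 * a 3 * ha.mid₂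
  have eq₁ : a 2 ^ 2 * a 5 * (7 * (a 2 * a 3) - a 0 * a 5) =
      a 3 ^ 3 * (8 * (a 0 * a 5) - 20 * (a 2 * a 3)) := by
    linear_combination 2 * a 3 ^ 2 * e15 - a 2 * a 5 * h133
  have eq₂ : a 2 ^ 2 * a 5 * (8 * (a 2 * a 3) - 5 * (a 0 * a 5)) =
      a 3 ^ 3 * (28 * (a 0 * a 5) - 16 * (a 2 * a 3)) := by
    refine natCast_mul_cancel h8 (n := 10) (by decide) ?_
    linear_combination 70 * a 3 ^ 2 * e15 - 5 * a 2 ^ 2 * e37 -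
      6 * a 2 * a 3 * (a 0 * ha.k3 - a 1 * ha.mid₀ - 9 * a 3 * ha.k0)
  -- Eliminating `a₂² a₅` leaves a perfect square.
  have hsq : (a 0 * a 5 + 2 * (a 2 * a 3)) ^ 2 = 0 := by
    refine mul_left_cancel₀ (pow_ne_zero 3 h3) <|
      natCast_mul_cancel h8 (n := 12) (by decide) ?_
    linear_combination (8 * (a 2 * a 3) - 5 * (a 0 * a 5)) * eq₁ -
      (7 * (a 2 * a 3) - a 0 * a 5) * eq₂
  linear_combination pow_eq_zero_iff two_ne_zero |>.mp hsq

theorem coeff_three_mul_coeff_five_eq_zero : a 3 * a 5 = 0 := by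
  by_contra h35
  obtain ⟨h3, h5⟩ := mul_ne_zero_iff.mp h35
  have h05 := ha.coeff_zero_mul_coeff_five_eq h8 h3 h5
  have h2 : a 2 ≠ 0 := by
    intro h2
    refine h35 (natCast_mul_cancel h8 (n := 4) (by decide) ?_)
    linear_combination a 6 * h2 - ha.mid₂
  have h0 : a 0 ≠ 0 := by
    intro h0
    refine h35 (natCast_mul_cancel h8 (n := 16) (by decide) ?_)
    linear_combination a 8 * h0 - ha.mid₀
  have h15 : a 1 * a 5 = -3 * a 3 ^ 2 := by
    refine mul_left_cancel₀ h2 <| natCast_mul_cancel h8 (n := 6) (by decide) ?_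
    linear_combination ha.six_mul_coeff_two_one_five + 4 * a 3 * h05
  have h37 : a 3 * a 7 = -3 * a 5 ^ 2 := by
    refine mul_left_cancel₀ h0 <| natCast_mul_cancel h8 (n := 6) (by decide) ?_
    linear_combination ha.six_mul_coeff_zero_three_seven + 8 * a 5 * h05
  exact ha.k2 <| mul_left_cancel₀ h35 <| by linear_combination a 3 * a 7 * h15 - 3 * a 3 ^ 2 * h37

theorem coeff_one_mul_coeff_seven_ne_zero : a 1 * a 7 ≠ 0 := fun h =>
  ha.k2 (by rw [h, ha.coeff_three_mul_coeff_five_eq_zero h8, mul_zero])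

theorem coeff_three_eq_zero : a 3 = 0 := by
  have h35 := ha.coeff_three_mul_coeff_five_eq_zero h8
  have h17 := ha.coeff_one_mul_coeff_seven_ne_zero h8
  by_contra h3
  have h5 : a 5 = 0 := (mul_eq_zero_iff_left h3).mp h35
  have h28 : a 2 * a 8 = 6 * (a 3 * a 7) := by rw [ha.k4, h5]; ring
  have h2 : a 2 ≠ 0 := by
    rintro h2
    rw [h2, zero_mul] at h28
    refine mul_ne_zero h3 (right_ne_zero_of_mul h17) <|
      natCast_mul_cancel h8 (n := 6) (by decide) ?_
    linear_combination -h28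
  have h6 : a 6 = 0 := (mul_eq_zero_iff_left h2).mp (by rw [ha.mid₂, h35, mul_zero])
  refine h3 (pow_eq_zero_iff two_ne_zero |>.mp <| natCast_mul_cancel h8 (n := 10) (by decide) ?_)
  linear_combination a 0 * h6 - ha.k0 - 6 * a 1 * h5

theorem coeff_five_eq_zero : a 5 = 0 :=
  ha.reverse.coeff_three_eq_zero h8

theorem coeff_zero_eq_zero_and_coeff_six_eq_zero : a 0 = 0 ∧ a 6 = 0 := by
  have h3 := ha.coeff_three_eq_zero h8
  have h5 := ha.coeff_five_eq_zero h8
  obtain ⟨h1, h7⟩ := mul_ne_zero_iff.mp (ha.coeff_one_mul_coeff_seven_ne_zero h8)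
  have h06 : a 0 * a 6 = 0 := by rw [ha.k0, h3, h5]; ring
  have h07 : a 0 * a 7 = 5 * (a 1 * a 6) := by rw [ha.k1, h5]; ring
  have h0 : a 0 = 0 := by
    refine pow_eq_zero_iff two_ne_zero |>.mp <| mul_right_cancel₀ h7 ?_
    linear_combination a 0 * h07 + 5 * a 1 * h06
  refine ⟨h0, mul_left_cancel₀ h1 <| natCast_mul_cancel h8 (n := 5) (by decide) ?_⟩
  rw [h0] at h07
  linear_combination -h07

theorem gLEquiv_modelOctic [IsAlgClosed K] : GLEquiv (binaryForm 8 a) modelOctic := by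
  obtain ⟨h1, h7⟩ := mul_ne_zero_iff.mp (ha.coeff_one_mul_coeff_seven_ne_zero h8)
  obtain ⟨h0, h6⟩ := ha.coeff_zero_eq_zero_and_coeff_six_eq_zero h8
  obtain ⟨h8', h2⟩ := ha.reverse.coeff_zero_eq_zero_and_coeff_six_eq_zero h8
  rw [binaryForm_eight_of_sparse h0 h2 (ha.coeff_three_eq_zero h8) ha.a4
    (ha.coeff_five_eq_zero h8) h6 h8']
  have n8 : (8 : K) ≠ 0 := mod_cast natCast_ne_zero h8 (n := 8) (by decide)
  exact _root_.gLEquiv_modelOctic (mul_ne_zero n8 h1) (mul_ne_zero n8 h7)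

end IsBalanced

section DegenerateQuartic

variable {K : Type*} [Field K]

theorem X_sub_sq_dvd_binaryForm {R : Type*} [CommRing R] {a : ℕ → R} {s : R}
    (a0 : a 0 = 48 * s ^ 7 * a 7) (a1 : a 1 = -35 * s ^ 6 * a 7) (a2 : a 2 = 24 * s ^ 5 * a 7)
    (a3 : a 3 = -15 * s ^ 4 * a 7) (a4 : a 4 = 8 * s ^ 3 * a 7) (a5 : a 5 = -3 * s ^ 2 * a 7)
    (a6 : a 6 = 0) (a8 : a 8 = 0) :
    (X 0 - C s * X 1) * (X 0 - C s * X 1) ∣ binaryForm 8 a := by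
  refine ⟨8 * C (a 7) * X 1 * (X 0 - C s * X 1) ^ 4 * (X 0 + 6 * C s * X 1), ?_⟩
  simp only [binaryForm_apply, reduceAdd, C_mul, map_natCast, Fin.isValue, sum_range_succ,
    range_one, sum_singleton, Nat.choose, cast_one, a0, C_ofNat_eq, C_pow, one_mul, pow_zero,
    tsub_zero, add_zero, cast_ofNat, a1, neg_mul, C_neg, mul_neg, pow_one, Nat.add_one_sub_one, a2,
    reduceSub, a3, a4, a5, a6, C_0, mul_zero, zero_mul, a8, tsub_self, mul_one]
  ring

theorem linSubstCoeff_eq_zero {n : ℕ} (hn : (n ! : K) ≠ 0) {a : ℕ → K} (ha : ∀ i ≤ n, a i = 0)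
    (M : Matrix (Fin 2) (Fin 2) K) {i : ℕ} (hi : i ≤ n) : linSubstCoeff M n a i = 0 := by
  refine (binaryForm_inj (b := 0) hn).mp ?_ i hi
  rw [← linSubst_binaryForm, binaryForm_congr (b := 0) ha, map_zero, map_zero]

namespace IsU6Octic

variable (h8 : ((8)! : K) ≠ 0) {a : ℕ → K} (ha : IsU6Octic a)
include h8 ha

theorem kCoeff_one_eq_zero (k2 : kCoeff a 2 = 0) (k3 : kCoeff a 3 = 0) (k4 : kCoeff a 4 = 0) :
    kCoeff a 1 = 0 := by
  by_contra k1
  have h0 : hessianCoeff (kCoeff a) 0 ≠ 0 := by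
    rw [hessianCoeff_zero h8, k2, mul_zero, zero_sub]
    exact mul_ne_zero (mod_cast natCast_ne_zero h8 (n := 2) (by decide))
      (neg_ne_zero.mpr (pow_ne_zero 2 k1))
  have h1 : hessianCoeff (kCoeff a) 1 = 0 := by
    rw [hessianCoeff_one h8, k2, k3]
    ring
  have h2 : hessianCoeff (kCoeff a) 2 = 0 := by
    refine natCast_mul_cancel h8 (n := 3) (by decide) ?_
    refine (three_mul_hessianCoeff_two h8 _).trans ?_
    rw [k2, k3, k4]
    ring
  have h3 : hessianCoeff (kCoeff a) 3 = 0 := by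
    rw [hessianCoeff_three h8, k3, k4]
    ring
  have h4 : hessianCoeff (kCoeff a) 4 = 0 := by
    rw [hessianCoeff_four h8, k3, k4]
    ring
  have h7 := ha.relations.shJ7
  have h9 := ha.relations.shJ9
  simp only [shJ7_binaryForm h8, apolarPairing_four, contractCoeff, k2, k3, k4, h1, h2, h3, h4]
    at h7
  simp only [shJ9_binaryForm h8, apolarPairing_four, contractCoeff, h1, h2, h3, h4] at h9
  have a8 : a 8 = 0 := mul_right_cancel₀ (pow_ne_zero 2 h0) (by linear_combination h9)
  refine ha.coeff_seven_ne_zero a8 <| mul_right_cancel₀ (mul_ne_zero k1 h0) <|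
    natCast_mul_cancel h8 (n := 4) (by decide) ?_
  linear_combination kCoeff a 0 * hessianCoeff (kCoeff a) 0 * a8 - h7

theorem shJ2_eq_zero (k1 : kCoeff a 1 = 0) (k2 : kCoeff a 2 = 0) (k3 : kCoeff a 3 = 0)
    (k4 : kCoeff a 4 = 0) : shJ2 (binaryForm 8 a) = 0 := by
  have h4 := ha.relations.shJ4
  rw [shJ4_binaryForm h8, apolarPairing_four, k1, k2, k3, k4] at h4
  exact pow_eq_zero_iff two_ne_zero |>.mp (by linear_combination -h4)

theorem equations_of_kCoeff_eq_zero (a6 : a 6 = 0) (a8 : a 8 = 0) (k1 : kCoeff a 1 = 0)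
    (k2 : kCoeff a 2 = 0) (k3 : kCoeff a 3 = 0) (k4 : kCoeff a 4 = 0) :
    3 * (a 3 * a 7) = -5 * a 5 ^ 2 ∧ a 2 * a 7 = -(a 4 * a 5) ∧ 64 * (a 3 * a 5) = 45 * a 4 ^ 2 ∧
      2 * (a 1 * a 7) = 34 * (a 3 * a 5) - 25 * a 4 ^ 2 ∧
      a 0 * a 7 = 5 * (a 3 * a 4) - 9 * (a 2 * a 5) := by
  have hJ := ha.shJ2_eq_zero h8 k1 k2 k3 k4
  have h1 := kCoeff_one h8 a
  have h2 := three_mul_kCoeff_two h8 a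
  have h3 := kCoeff_three h8 a
  have h4 := kCoeff_four h8 a
  rw [shJ2_binaryForm h8, apolarPairing_eight, a6, a8] at hJ
  rw [k1, a6] at h1
  rw [k2, a6, a8] at h2
  rw [k3, a6, a8] at h3
  rw [k4, a6, a8] at h4
  refine ⟨?_, ?_, ?_, by linear_combination h2, by linear_combination -h1⟩
  · exact natCast_mul_cancel h8 (n := 4) (by decide) (by linear_combination h4)
  · exact natCast_mul_cancel h8 (n := 5) (by decide) (by linear_combination h3)
  · exact natCast_mul_cancel h8 (n := 6) (by decide) (by linear_combination -hJ - 8 * h2)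

theorem false_of_coeff_six_eq_zero (a6 : a 6 = 0) (a8 : a 8 = 0) (k1 : kCoeff a 1 = 0)
    (k2 : kCoeff a 2 = 0) (k3 : kCoeff a 3 = 0) (k4 : kCoeff a 4 = 0) : False := by
  have a7 := ha.coeff_seven_ne_zero a8
  obtain ⟨h37, h27, h35, h17, h07⟩ := ha.equations_of_kCoeff_eq_zero h8 a6 a8 k1 k2 k3 k4
  have n3 : (3 : K) ≠ 0 := mod_cast natCast_ne_zero h8 (n := 3) (by decide)
  have n8 : (8 : K) ≠ 0 := mod_cast natCast_ne_zero h8 (n := 8) (by decide)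
  have hcusp : 27 * (a 4 ^ 2 * a 7) = -64 * a 5 ^ 3 :=
    natCast_mul_cancel h8 (n := 5) (by decide) <| by
      linear_combination 64 * a 5 * h37 - 3 * a 7 * h35
  -- The parameter `s` on the cuspidal cubic `hcusp` is a root of the octic of multiplicity six.
  obtain ⟨s, hs2, hs3⟩ := exists_sq_eq_and_cube_eq
    (x := -a 5 / (3 * a 7)) (y := a 4 / (8 * a 7)) (by
      field_simp
      linear_combination hcusp)
  rw [eq_div_iff (mul_ne_zero n3 a7)] at hs2
  rw [eq_div_iff (mul_ne_zero n8 a7)] at hs3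
  have a5 : a 5 = -3 * s ^ 2 * a 7 := by linear_combination hs2
  have a4 : a 4 = 8 * s ^ 3 * a 7 := by linear_combination -hs3
  rw [a5] at h37
  rw [a4, a5] at h27
  have a3 : a 3 = -15 * s ^ 4 * a 7 := mul_right_cancel₀ a7 <|
    natCast_mul_cancel h8 (n := 3) (by decide) (by linear_combination h37)
  have a2 : a 2 = 24 * s ^ 5 * a 7 := mul_right_cancel₀ a7 (by linear_combination h27)
  rw [a3, a4, a5] at h17
  rw [a2, a3, a4, a5] at h07
  have a1 : a 1 = -35 * s ^ 6 * a 7 := mul_right_cancel₀ a7 <|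
    natCast_mul_cancel h8 (n := 2) (by decide) (by linear_combination h17)
  have a0 : a 0 = 48 * s ^ 7 * a 7 := mul_right_cancel₀ a7 (by linear_combination h07)
  exact constantCoeff_ne_zero_of_mul_self_dvd ha.squarefree
    (X_sub_sq_dvd_binaryForm a0 a1 a2 a3 a4 a5 a6 a8) (by simp)

theorem false_of_coeff_eight_eq_zero (a8 : a 8 = 0) (k1 : kCoeff a 1 = 0)
    (k2 : kCoeff a 2 = 0) (k3 : kCoeff a 3 = 0) (k4 : kCoeff a 4 = 0) : False := by
  have a7 := ha.coeff_seven_ne_zero a8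
  obtain ⟨s, hs⟩ := exists_linSubstCoeff_shear_eq_zero (m := 1) (i := 6)
    (natCast_ne_zero h8 (by decide)) (fun j hj hj' => by grind) a7
  have hdet : IsUnit !![1, s; 0, 1].det := by simp
  have hk {i} (hi : i ≤ 4) (hpos : 0 < i) :
      kCoeff (_root_.linSubstCoeff !![1, s; 0, 1] 8 a) i = 0 := by
    rw [kCoeff_linSubstCoeff h8 _ _ hi,
      linSubstCoeff_shear_eq_self hi (fun j hj hj' => by interval_cases j <;> grind)]
    interval_cases i <;> simp only [*, mul_zero]
  refine (ha.linSubstCoeff hdet).false_of_coeff_six_eq_zero h8 hs ?_ (hk (by decide) (by decide))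
    (hk (by decide) (by decide)) (hk (by decide) (by decide)) (hk (by decide) (by decide))
  rw [linSubstCoeff_shear_eq_self le_rfl (fun j hj hj' => by grind), a8]

theorem false_of_kCoeff_eq_zero [IsAlgClosed K] (k1 : kCoeff a 1 = 0)
    (k2 : kCoeff a 2 = 0) (k3 : kCoeff a 3 = 0) (k4 : kCoeff a 4 = 0) : False := by
  by_cases k0 : kCoeff a 0 = 0
  · obtain ⟨M, hM, a8⟩ := exists_linSubstCoeff_self_eq_zero (n := 8) (by decide) a
    have hk {i} (hi : i ≤ 4) : kCoeff (_root_.linSubstCoeff M 8 a) i = 0 := by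
      rw [kCoeff_linSubstCoeff h8 M a hi, linSubstCoeff_eq_zero (four_factorial_ne_zero h8) ?_ M hi,
        mul_zero]
      intro j hj
      interval_cases j <;> assumption
    exact (ha.linSubstCoeff hM).false_of_coeff_eight_eq_zero h8 a8 (hk (by decide))
      (hk (by decide)) (hk (by decide)) (hk (by decide))
  · have h5 := ha.relations.shJ5
    simp only [shJ5_binaryForm h8, apolarPairing_four, contractCoeff, k1, k2, k3, k4] at h5
    exact ha.false_of_coeff_eight_eq_zero h8
      (mul_right_cancel₀ (pow_ne_zero 2 k0) (by linear_combination h5)) k1 k2 k3 k4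

theorem kCoeff_two_ne_zero [IsAlgClosed K] (k3 : kCoeff a 3 = 0) (k4 : kCoeff a 4 = 0) :
    kCoeff a 2 ≠ 0 := fun k2 =>
  ha.false_of_kCoeff_eq_zero h8 (ha.kCoeff_one_eq_zero h8 k2 k3 k4) k2 k3 k4

theorem gLEquiv_modelOctic_of_kCoeff [IsAlgClosed K] (k3 : kCoeff a 3 = 0)
    (k4 : kCoeff a 4 = 0) : GLEquiv (binaryForm 8 a) modelOctic := by
  have k2 := ha.kCoeff_two_ne_zero h8 k3 k4
  have htail {i} (hi : 2 ≤ i) (j) (hij : i < j) (hj : j ≤ 4) : kCoeff a j = 0 := by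
    obtain rfl | rfl : j = 3 ∨ j = 4 := by lia
    exacts [k3, k4]
  obtain ⟨s, hs⟩ := exists_linSubstCoeff_shear_eq_zero (m := 2) (i := 1)
    (natCast_ne_zero h8 (by decide)) (htail le_rfl) k2
  have hM : IsUnit !![1, s; 0, 1].det := by simp
  have hk {i} (hi : i ≤ 4) := kCoeff_linSubstCoeff h8 !![1, s; 0, 1] a hi
  have hk' {i} (hi : 2 ≤ i) (hi' : i ≤ 4) :
      kCoeff (_root_.linSubstCoeff !![1, s; 0, 1] 8 a) i = kCoeff a i := by
    rw [hk hi', linSubstCoeff_shear_eq_self hi' (htail hi), Matrix.det_fin_two_of]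
    ring
  have hred : IsReducedQuartic (kCoeff (_root_.linSubstCoeff !![1, s; 0, 1] 8 a)) :=
    ⟨by rw [hk (by decide), hs, mul_zero], by rw [hk' (by decide) (by decide), k3],
      by rw [hk' (by decide) (by decide), k4]⟩
  have hk2 : kCoeff (_root_.linSubstCoeff !![1, s; 0, 1] 8 a) 2 ≠ 0 := by
    rwa [hk' le_rfl (by decide)]
  refine .of_linSubst hM ?_
  rw [linSubst_binaryForm]
  exact ((ha.linSubstCoeff hM).isBalanced h8 hred hk2).gLEquiv_modelOctic h8

theorem gLEquiv_modelOctic [IsAlgClosed K] : GLEquiv (binaryForm 8 a) modelOctic := by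
  obtain ⟨M, hM, k3, k4⟩ := hasMultipleRoot_of_discrEqZero h8 (ha.discrEqZero_kCoeff h8)
  refine .of_linSubst hM ?_
  rw [linSubst_binaryForm]
  refine (ha.linSubstCoeff hM).gLEquiv_modelOctic_of_kCoeff h8 ?_ ?_
  · rw [kCoeff_linSubstCoeff h8 M a (by decide), k3, mul_zero]
  · rw [kCoeff_linSubstCoeff h8 M a (by decide), k4, mul_zero]

end IsU6Octic

end DegenerateQuartic

section Model

variable {K : Type*} [Field K]

theorem IsRelativeInvariant.eq_zero_of_linSubst_eq {w : ℕ} {J : MvPolynomial (Fin 2) K → K}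
    (hJ : IsRelativeInvariant w J) {M : Matrix (Fin 2) (Fin 2) K} {f : MvPolynomial (Fin 2) K}
    (hf : linSubst M f = f) (hM : M.det ^ w ≠ 1) : J f = 0 := by
  by_contra hne
  refine hM ((mul_eq_right₀ hne).mp ?_)
  rw [← hJ, hf]

theorem exists_linSubst_modelOctic_eq [IsAlgClosed K] :
    ∃ M : Matrix (Fin 2) (Fin 2) K, linSubst M modelOctic = modelOctic ∧ M.det ^ 4 = -1 := by
  obtain ⟨p, hp⟩ := IsAlgClosed.exists_pow_nat_eq (-1 : K) (n := 24) (by decide)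
  have hX : p ^ 7 * p ^ 41 = 1 := by linear_combination (p ^ 24 - 1) * hp
  have hZ : p * (p ^ 41) ^ 7 = 1 := by
    calc p * (p ^ 41) ^ 7 = (p ^ 24) ^ 12 := by ring
      _ = 1 := by rw [hp]; norm_num
  refine ⟨!![p, 0; 0, p ^ 41], ?_, ?_⟩
  · rw [linSubst_diagonal_modelOctic, hX, hZ, map_one, one_mul, one_mul, modelOctic]
  · calc (!![p, 0; 0, p ^ 41] : Matrix (Fin 2) (Fin 2) K).det ^ 4 = (p ^ 24) ^ 7 := by
          rw [Matrix.det_fin_two_of]; ring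
      _ = -1 := by rw [hp]; norm_num

theorem IsRelativeInvariant.modelOctic_eq_zero [IsAlgClosed K] (h2 : (2 : K) ≠ 0) {d : ℕ}
    (hd : Odd d) {J : MvPolynomial (Fin 2) K → K} (hJ : IsRelativeInvariant (4 * d) J) :
    J modelOctic = 0 := by
  obtain ⟨M, hfix, hdet⟩ := exists_linSubst_modelOctic_eq (K := K)
  refine hJ.eq_zero_of_linSubst_eq hfix ?_
  rw [pow_mul, hdet, hd.neg_one_pow]
  exact fun h => h2 (by linear_combination -h)

/-- The coefficients of `modelOctic` as a `binaryForm`. -/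
def modelCoeff (i : ℕ) : K :=
  if i = 1 then -1 / 8 else if i = 7 then 1 / 8 else 0

variable (h8 : ((8)! : K) ≠ 0)
include h8

theorem binaryForm_modelCoeff : binaryForm 8 modelCoeff = modelOctic (R := K) := by
  have n8 : (8 : K) ≠ 0 := mod_cast natCast_ne_zero h8 (n := 8) (by decide)
  rw [binaryForm_eight_of_sparse rfl rfl rfl rfl rfl rfl rfl]
  simp only [modelCoeff, reduceEqDiff, if_true, if_false, mul_div_cancel₀ _ n8, map_neg, map_one,
    modelOctic]
  ring

theorem apolarPairing_modelCoeff : apolarPairing 8 modelCoeff (modelCoeff (K := K)) = 1 / 4 := by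
  have n8 : (8 : K) ≠ 0 := mod_cast natCast_ne_zero h8 (n := 8) (by decide)
  have n4 : (4 : K) ≠ 0 := mod_cast natCast_ne_zero h8 (n := 4) (by decide)
  simp only [apolarPairing_eight, modelCoeff, reduceEqDiff, if_true, if_false]
  field_simp
  norm_num

theorem kCoeff_modelCoeff_zero : kCoeff (modelCoeff (K := K)) 0 = 0 := by
  simp [kCoeff_zero h8, modelCoeff]

theorem isReducedQuartic_kCoeff_modelCoeff : IsReducedQuartic (kCoeff (modelCoeff (K := K))) where
  k1 := by simp [kCoeff_one h8, modelCoeff]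
  k3 := by simp [kCoeff_three h8, modelCoeff]
  k4 := by simp [kCoeff_four h8, modelCoeff]

theorem kCoeff_modelCoeff_two : kCoeff (modelCoeff (K := K)) 2 = 1 / 96 := by
  have n8 : (8 : K) ≠ 0 := mod_cast natCast_ne_zero h8 (n := 8) (by decide)
  have n96 : (96 : K) ≠ 0 := mod_cast natCast_ne_zero h8 (n := 96) (by decide)
  have h := three_mul_kCoeff_two h8 (modelCoeff (K := K))
  simp only [modelCoeff, reduceEqDiff, if_true, if_false] at h
  refine natCast_mul_cancel h8 (n := 3) (by decide) ?_
  push_cast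
  rw [h]
  field_simp
  norm_num

theorem gCoeff_modelCoeff_four : gCoeff (modelCoeff (K := K)) 4 = -3 / 560 := by
  have n8 : (8 : K) ≠ 0 := mod_cast natCast_ne_zero h8 (n := 8) (by decide)
  have n560 : (560 : K) ≠ 0 := mod_cast natCast_ne_zero h8 (n := 560) (by decide)
  have h := seventy_mul_gCoeff_four h8 (modelCoeff (K := K))
  simp only [modelCoeff, reduceEqDiff, if_true, if_false] at h
  refine natCast_mul_cancel h8 (n := 70) (by decide) ?_
  push_cast
  rw [h]
  field_simp
  norm_num

theorem even_shiodaRelations_modelOctic :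
    96 * shJ4 (modelOctic (R := K)) = shJ2 modelOctic ^ 2 ∧
      2304 * shJ6 (modelOctic (R := K)) = -(shJ2 modelOctic ^ 3) ∧
      17920 * shJ8 (modelOctic (R := K)) = shJ2 modelOctic ^ 4 ∧
      430080 * shJ10 (modelOctic (R := K)) = -(shJ2 modelOctic ^ 5) := by
  have hk := isReducedQuartic_kCoeff_modelCoeff h8
  have hh := hk.hessianCoeff h8
  have n4 : (4 : K) ≠ 0 := mod_cast natCast_ne_zero h8 (n := 4) (by decide)
  have n96 : (96 : K) ≠ 0 := mod_cast natCast_ne_zero h8 (n := 96) (by decide)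
  have n560 : (560 : K) ≠ 0 := mod_cast natCast_ne_zero h8 (n := 560) (by decide)
  rw [← binaryForm_modelCoeff h8, shJ2_binaryForm h8, shJ4_binaryForm h8, shJ6_binaryForm h8,
    shJ8_binaryForm h8, shJ10_binaryForm h8, hk.apolarPairing_eq hk, hk.apolarPairing_eq hh,
    hk.apolarPairing_contractCoeff hh, hh.apolarPairing_contractCoeff hh, hk.hessianCoeff_zero h8,
    hk.hessianCoeff_two h8, apolarPairing_modelCoeff h8, kCoeff_modelCoeff_zero h8,
    kCoeff_modelCoeff_two h8, gCoeff_modelCoeff_four h8]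
  refine ⟨?_, ?_, ?_, ?_⟩ <;> field_simp <;> norm_num

theorem GLEquiv.shiodaRelations [IsAlgClosed K] {f : MvPolynomial (Fin 2) K}
    (hf : GLEquiv f modelOctic) :
    96 * shJ4 f = shJ2 f ^ 2 ∧ 2304 * shJ6 f = -(shJ2 f ^ 3) ∧
      17920 * shJ8 f = shJ2 f ^ 4 ∧ 430080 * shJ10 f = -(shJ2 f ^ 5) ∧
      shJ3 f = 0 ∧ shJ5 f = 0 ∧ shJ7 f = 0 ∧ shJ9 f = 0 := by
  obtain ⟨M, -, rfl⟩ := hf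
  have n2 : (2 : K) ≠ 0 := mod_cast natCast_ne_zero h8 (n := 2) (by decide)
  obtain ⟨h4, h6, h8, h10⟩ := even_shiodaRelations_modelOctic h8
  have h3 := isRelativeInvariant_shJ3.modelOctic_eq_zero n2 (d := 3) (by decide)
  have h5 := isRelativeInvariant_shJ5.modelOctic_eq_zero n2 (d := 5) (by decide)
  have h7 := isRelativeInvariant_shJ7.modelOctic_eq_zero n2 (d := 7) (by decide)
  have h9 := isRelativeInvariant_shJ9.modelOctic_eq_zero n2 (d := 9) (by decide)
  simp only [isRelativeInvariant_shJ2 M, isRelativeInvariant_shJ3 M, isRelativeInvariant_shJ4 M,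
    isRelativeInvariant_shJ5 M, isRelativeInvariant_shJ6 M, isRelativeInvariant_shJ7 M,
    isRelativeInvariant_shJ8 M, isRelativeInvariant_shJ9 M, isRelativeInvariant_shJ10 M,
    h3, h5, h7, h9, mul_zero, and_self, and_true]
  exact ⟨by linear_combination M.det ^ 16 * h4, by linear_combination M.det ^ 24 * h6,
    by linear_combination M.det ^ 32 * h8, by linear_combination M.det ^ 40 * h10⟩

end Model

theorem factorial_cast_ne_zero {R : Type*} [Ring R] [IsDomain R] {n : ℕ}
    (hR : ringChar R = 0 ∨ n < ringChar R) : (n ! : R) ≠ 0 := by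
  rw [Ne, ringChar.spec]
  rcases CharP.char_is_prime_or_zero R (ringChar R) with hp | h0
  · exact hp.dvd_factorial.not.mpr (hR.resolve_left hp.ne_zero).not_ge
  · rw [h0, zero_dvd_iff]
    exact factorial_ne_zero n

theorem linSubst_fin_two {R : Type*} [CommRing R] (M : Matrix (Fin 2) (Fin 2) R) :
    linSubst M = bind₁ fun j : Fin 2 => C (M j 0) * X 0 + C (M j 1) * X 1 := by
  ext i : 1
  simp [linSubst_X]

theorem statement17_general {K : Type*} [Field K] [IsAlgClosed K]
    (hchar : ringChar K = 0 ∨ 11 ≤ ringChar K)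
    (f : MvPolynomial (Fin 2) K) (hf : f.IsHomogeneous 8) (hsf : Squarefree f) :
    List.TFAE [
      U6Relations f,
      96 * shJ4 f = shJ2 f ^ 2 ∧ 2304 * shJ6 f = -(shJ2 f ^ 3) ∧
        17920 * shJ8 f = shJ2 f ^ 4 ∧ 430080 * shJ10 f = -(shJ2 f ^ 5) ∧
        shJ3 f = 0 ∧ shJ5 f = 0 ∧ shJ7 f = 0 ∧ shJ9 f = 0,
      ∃ M : Matrix (Fin 2) (Fin 2) K, IsUnit M.det ∧
        f = bind₁ (fun j : Fin 2 => C (M j 0) * X 0 + C (M j 1) * X 1)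
          (X 0 ^ 7 * X 1 - X 0 * X 1 ^ 7)] := by
  have h8 : ((8)! : K) ≠ 0 := factorial_cast_ne_zero (hchar.imp_right (by lia))
  simp only [← linSubst_fin_two]
  tfae_have 2 → 1 := fun ⟨h4, h6, h8, _, _, h5, h7, h9⟩ => ⟨h4, h6, h8, h5, h7, h9⟩
  tfae_have 3 → 2 := GLEquiv.shiodaRelations h8
  tfae_have 1 → 3 := fun hrel => by
    obtain ⟨a, rfl⟩ := exists_eq_binaryForm h8 hf
    exact IsU6Octic.gLEquiv_modelOctic h8 ⟨hsf, hrel⟩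
  tfae_finish

/-- Identification of the stratum `U₆`: a squarefree binary octic `f` over an algebraically
closed field of characteristic `0` or `≥ 11` satisfies `96·J₄ = J₂²`, `2304·J₆ = −J₂³`,
`17920·J₈ = J₂⁴`, `430080·J₁₀ = −J₂⁵` and `J₃ = J₅ = J₇ = J₉ = 0` iff `f` is
`GL₂(K)`-equivalent to `X⁷Z − XZ⁷` (the homogenization of `x⁷ − x`); equivalently the
genus-3 curve `y² = f(x,1)` has automorphism group `U₆ = ⟨S,T : S¹² = T² = 1, TST = S⁵⟩`
(of order 24) iff these relations hold, and such a curve is `K`-isomorphic to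
`y² = x⁷ − x`. -/
theorem statement17 {K : Type*} [Field K] [IsAlgClosed K]
    (hchar : ringChar K = 0 ∨ 11 ≤ ringChar K)
    (f : MvPolynomial (Fin 2) K) (hf : f.IsHomogeneous 8) (hsf : Squarefree f) :
    (96 * shJ4 f = shJ2 f ^ 2 ∧ 2304 * shJ6 f = -(shJ2 f ^ 3) ∧
      17920 * shJ8 f = shJ2 f ^ 4 ∧ 430080 * shJ10 f = -(shJ2 f ^ 5) ∧
      shJ3 f = 0 ∧ shJ5 f = 0 ∧ shJ7 f = 0 ∧ shJ9 f = 0) ↔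
    ∃ M : Matrix (Fin 2) (Fin 2) K, IsUnit M.det ∧
      f = bind₁ (fun j : Fin 2 => C (M j 0) * X 0 + C (M j 1) * X 1)
        (X 0 ^ 7 * X 1 - X 0 * X 1 ^ 7) :=
  (statement17_general hchar f hf hsf).out 1 2
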